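/- Let s ∈ (0,1) and u, v ∈ C_c^∞(ℝⁿ), and let U, V be their Caffarelli–Silvestre extensions. Then for every x ∈ ℝⁿ, Γ₁(u,v)(x) = β_s ∫₀^∞ ( P_z^{(s)} ∗ ( ∇_x U(·,z)·∇_x V(·,z) + ∂_z U(·,z) ∂_z V(·,z) ) )(x) z^{1−2s} dz. -/

import Mathlib

open MeasureTheory Filter Set
open scoped Topology ENNReal NNReal

noncomputable section

/-- `ℝⁿ` with the Euclidean norm. -/
abbrev En (n : ℕ) := EuclideanSpace ℝ (Fin n)

/-- The normalizing constant `p(n,s) = Γ(n/2+s)/(π^{n/2} Γ(s))` of the Poisson kernel. -/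
def pns (n : ℕ) (s : ℝ) : ℝ :=
  Real.Gamma ((n : ℝ) / 2 + s) / (Real.pi ^ ((n : ℝ) / 2) * Real.Gamma s)

/-- The fractional Poisson kernel `P_z^{(s)}(x) = p(n,s) z^{2s} (|x|² + z²)^{-(n+2s)/2}`. -/
def Pker (n : ℕ) (s z : ℝ) (x : En n) : ℝ :=
  pns n s * z ^ (2 * s) * (‖x‖ ^ 2 + z ^ 2) ^ (-((n : ℝ) + 2 * s) / 2)

/-- Convolution with the fractional Poisson kernel in the first variable, at fixed `z`. -/
def Pconv (n : ℕ) (s z : ℝ) (f : En n → ℝ) (x : En n) : ℝ :=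
  ∫ y, Pker n s z (x - y) * f y

/-- The Caffarelli–Silvestre extension `U(x,z) = (P_z^{(s)} ∗ u)(x)`. -/
def CSext (n : ℕ) (s : ℝ) (u : En n → ℝ) (x : En n) (z : ℝ) : ℝ :=
  Pconv n s z u x

/-- The constant `C(n,s) = 4^s Γ(n/2+s) / (π^{n/2} |Γ(-s)|)`. -/
def Cns (n : ℕ) (s : ℝ) : ℝ :=
  4 ^ s * Real.Gamma ((n : ℝ) / 2 + s) / (Real.pi ^ ((n : ℝ) / 2) * |Real.Gamma (-s)|)

/-- The fractional Laplacian `(-Δ)^s w(x)` as a principal-value singular integral. -/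
def fracLap (n : ℕ) (s : ℝ) (w : En n → ℝ) (x : En n) : ℝ :=
  Cns n s * limUnder (𝓝[>] (0 : ℝ))
    (fun ε : ℝ => ∫ y in {y : En n | ε < ‖x - y‖}, (w x - w y) / ‖x - y‖ ^ ((n : ℝ) + 2 * s))

/-- `Λ^s w := -(-Δ)^s w`. -/
def Lam (n : ℕ) (s : ℝ) (w : En n → ℝ) (x : En n) : ℝ := - fracLap n s w x

/-- The first-order carré du champ `Γ₁(u,v) = ½(Λ^s(uv) - u Λ^s v - v Λ^s u)`. -/
def Gamma1 (n : ℕ) (s : ℝ) (u v : En n → ℝ) (x : En n) : ℝ :=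
  (Lam n s (fun y => u y * v y) x - u x * Lam n s v x - v x * Lam n s u x) / 2

/-- The constant `β_s = 2^{2s-1} Γ(s)/Γ(1-s)`. -/
def betaS (s : ℝ) : ℝ := 2 ^ (2 * s - 1) * Real.Gamma s / Real.Gamma (1 - s)

/-- Partial derivative in the `i`-th coordinate direction. -/
def pd {n : ℕ} (i : Fin n) (f : En n → ℝ) (x : En n) : ℝ :=
  fderiv ℝ f x (EuclideanSpace.single i 1)

/-- The Laplacian in the `x`-variables. -/
def lapX {n : ℕ} (f : En n → ℝ) (x : En n) : ℝ := ∑ i, pd i (pd i f) x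

/-- The degenerate operator `L_s W = div_{x,z}(z^{1-2s} ∇̃W)`, written out as
`z^{1-2s} Δ_x W + ∂_z(z^{1-2s} ∂_z W)`. -/
def LsOp {n : ℕ} (s : ℝ) (W : En n → ℝ → ℝ) (x : En n) (z : ℝ) : ℝ :=
  z ^ (1 - 2 * s) * lapX (fun y => W y z) x
    + deriv (fun t => t ^ (1 - 2 * s) * deriv (W x) t) z

/-- The Bessel-type integral `∫ τ^{s-1} e^{-τ-m/τ} dτ`. -/
def Kb (s m : ℝ) : ℝ := ∫ τ in Ioi (0:ℝ), τ ^ (s - 1) * Real.exp (-τ - m / τ)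

/-- Fourier multiplier of the Poisson kernel, `κ = |k|²`. -/
def psi (s κ z : ℝ) : ℝ := Kb s (κ * z ^ 2 / 4) / Real.Gamma s

lemma gam_int {s : ℝ} (hs : 0 < s) :
    IntegrableOn (fun τ : ℝ => τ ^ (s - 1) * Real.exp (-τ)) (Ioi 0) := by
  simpa [mul_comm] using Real.GammaIntegral_convergent hs

lemma Kb_bound {s m τ : ℝ} (hm : 0 ≤ m) (hτ : 0 < τ) :
    τ ^ (s - 1) * Real.exp (-τ - m / τ) ≤ τ ^ (s - 1) * Real.exp (-τ) := by
  gcongr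
  have : 0 ≤ m / τ := by positivity
  linarith

lemma Kb_meas (s m : ℝ) : Measurable (fun τ : ℝ => τ ^ (s - 1) * Real.exp (-τ - m / τ)) := by
  fun_prop

lemma Kb_integrable {s m : ℝ} (hs : 0 < s) (hm : 0 ≤ m) :
    IntegrableOn (fun τ : ℝ => τ ^ (s - 1) * Real.exp (-τ - m / τ)) (Ioi 0) := by
  refine Integrable.mono' (gam_int hs) (Kb_meas s m).aestronglyMeasurable ?_
  filter_upwards [ae_restrict_mem measurableSet_Ioi] with τ hτ
  rw [mem_Ioi] at hτ
  rw [Real.norm_of_nonneg (by positivity)]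
  exact Kb_bound hm hτ

lemma Kb_zero {s : ℝ} (hs : 0 < s) : Kb s 0 = Real.Gamma s := by
  rw [Kb, Real.Gamma_eq_integral hs]
  congr 1; ext τ; simp [mul_comm]

lemma Kb_nonneg (s m : ℝ) : 0 ≤ Kb s m := by
  refine setIntegral_nonneg measurableSet_Ioi fun τ hτ => ?_
  rw [mem_Ioi] at hτ
  positivity

lemma Kb_le {s m : ℝ} (hs : 0 < s) (hm : 0 ≤ m) : Kb s m ≤ Real.Gamma s := by
  rw [← Kb_zero hs]
  refine setIntegral_mono_on (Kb_integrable hs hm) (Kb_integrable hs le_rfl) measurableSet_Ioi ?_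
  intro τ hτ
  simpa using Kb_bound (s := s) hm hτ

/-- Key bound for the differentiated integrand. -/
lemma Kb_bound' {s m τ : ℝ} (hm : 0 < m) (hτ : 0 < τ) :
    τ ^ (s - 2) * Real.exp (-τ - m / τ) ≤ m⁻¹ * (τ ^ (s - 1) * Real.exp (-τ)) := by
  have h1 : Real.exp (-(m / τ)) ≤ τ / m := by
    rw [Real.exp_neg, inv_le_comm₀ (Real.exp_pos _) (by positivity), inv_div]
    have := Real.add_one_le_exp (m / τ)
    linarith
  have h2 : τ ^ (s - 1) = τ ^ (s - 2) * τ := by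
    rw [← Real.rpow_add_one hτ.ne']; congr 1; ring
  rw [h2, sub_eq_add_neg (-τ), Real.exp_add]
  calc τ ^ (s - 2) * (Real.exp (-τ) * Real.exp (-(m / τ)))
      ≤ τ ^ (s - 2) * (Real.exp (-τ) * (τ / m)) := by gcongr
    _ = _ := by field_simp

lemma Kb_deriv {s m : ℝ} (hs : 0 < s) (hm : 0 < m) :
    HasDerivAt (Kb s) (-Kb (s - 1) m) m := by
  have key := hasDerivAt_integral_of_dominated_loc_of_deriv_le
    (μ := volume.restrict (Ioi (0:ℝ))) (F := fun m τ => τ ^ (s - 1) * Real.exp (-τ - m / τ))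
    (F' := fun m τ => - (τ ^ (s - 1 - 1) * Real.exp (-τ - m / τ)))
    (x₀ := m) (s := Ioi (m / 2)) (bound := fun τ => (m / 2)⁻¹ * (τ ^ (s - 1) * Real.exp (-τ)))
    (Ioi_mem_nhds (by linarith))
    (Eventually.of_forall fun m' => (Kb_meas s m').aestronglyMeasurable)
    (Kb_integrable hs hm.le)
    ((Kb_meas (s - 1) m).neg.aestronglyMeasurable) ?_ ((gam_int hs).const_mul _) ?_
  · have := key.2
    rw [integral_neg] at this
    exact this
  · filter_upwards [ae_restrict_mem measurableSet_Ioi] with τ hτ m' hm'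
    rw [mem_Ioi] at hτ hm'
    rw [norm_neg, Real.norm_of_nonneg (by positivity)]
    have : s - 1 - 1 = s - 2 := by ring
    rw [this]
    refine le_trans ?_ (Kb_bound' (by linarith) hτ)
    gcongr
  · filter_upwards [ae_restrict_mem measurableSet_Ioi] with τ hτ m' hm'
    rw [mem_Ioi] at hτ hm'
    have h1 : HasDerivAt (fun m' : ℝ => -τ - m' / τ) (-(1 / τ)) m' := by
      simpa using ((hasDerivAt_id m').div_const τ).const_sub (-τ)
    have h2 := (h1.exp).const_mul (τ ^ (s - 1))
    refine h2.congr_deriv ?_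
    rw [Real.rpow_sub_one hτ.ne' (s - 1)]
    field_simp

/-- change of variables `τ ↦ 1/τ` -/
lemma integral_inv_Ioi (f : ℝ → ℝ) :
    ∫ τ in Ioi (0:ℝ), f τ = ∫ t in Ioi (0:ℝ), t ^ (-2 : ℝ) * f t⁻¹ := by
  rw [← integral_comp_rpow_Ioi f (p := -1) (by norm_num)]
  refine setIntegral_congr_fun measurableSet_Ioi fun t ht => ?_
  simp only [smul_eq_mul, Real.rpow_neg_one]
  norm_num

lemma Kb_inv {s m : ℝ} (hm : 0 < m) : Kb (s - 1) m = m ^ (s - 1) * Kb (1 - s) m := by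
  rw [Kb, integral_inv_Ioi]
  have h := integral_comp_mul_left_Ioi
    (fun t : ℝ => t ^ (-2 : ℝ) * (t⁻¹ ^ (s - 1 - 1) * Real.exp (-t⁻¹ - m / t⁻¹))) 0
    (b := m⁻¹) (by positivity)
  rw [mul_zero, inv_inv, smul_eq_mul] at h
  have h' : ∀ A B : ℝ, B = m * A → A = m⁻¹ * B := by
    intro A B h; rw [h]; field_simp
  rw [h' _ _ h, Kb, ← integral_const_mul, ← integral_const_mul]
  refine setIntegral_congr_fun measurableSet_Ioi fun t ht => ?_
  rw [mem_Ioi] at ht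
  have e1 : (m⁻¹ * t)⁻¹ = m * t⁻¹ := by field_simp
  have e2 : -(m * t⁻¹) - m / (m * t⁻¹) = -t - m / t := by field_simp; ring
  rw [e1, e2, Real.mul_rpow (by positivity) ht.le, Real.mul_rpow hm.le (by positivity),
    Real.inv_rpow ht.le, Real.inv_rpow hm.le, ← Real.rpow_neg hm.le, ← Real.rpow_neg ht.le,
    ← Real.rpow_neg_one m]
  have e3 : t ^ (1 - s - 1) = t ^ (-2 : ℝ) * t ^ (-(s - 1 - 1)) := by
    rw [← Real.rpow_add ht]; congr 1; ring
  have e4 : m ^ (s - 1) = m ^ (-1 : ℝ) * m ^ (-(-2 : ℝ)) * m ^ (s - 1 - 1) := by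
    rw [← Real.rpow_add hm, ← Real.rpow_add hm]; congr 1; ring
  rw [e3, e4]; ring

lemma psi_nonneg {s : ℝ} (hs : 0 < s) (κ z : ℝ) : 0 ≤ psi s κ z :=
  div_nonneg (Kb_nonneg _ _) (Real.Gamma_pos_of_pos hs).le

lemma psi_le_one {s κ : ℝ} (hs : 0 < s) (hκ : 0 ≤ κ) (z : ℝ) : psi s κ z ≤ 1 := by
  rw [psi, div_le_one (Real.Gamma_pos_of_pos hs)]
  exact Kb_le hs (by positivity)

lemma psi_at_zero {s : ℝ} (hs : 0 < s) (κ : ℝ) : psi s κ 0 = 1 := by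
  rw [psi]; simp [Kb_zero hs, (Real.Gamma_pos_of_pos hs).ne']

lemma psi_zero_left {s : ℝ} (hs : 0 < s) (z : ℝ) : psi s 0 z = 1 := by
  rw [psi]; simp [Kb_zero hs, (Real.Gamma_pos_of_pos hs).ne']

lemma psi_continuous {s κ : ℝ} (hs : 0 < s) (hκ : 0 ≤ κ) : Continuous (psi s κ) := by
  unfold psi Kb
  refine Continuous.div_const ?_ _
  refine continuous_of_dominated (bound := fun τ : ℝ => τ ^ (s - 1) * Real.exp (-τ))
    (fun z => (Kb_meas s _).aestronglyMeasurable) (fun z => ?_) (gam_int hs) ?_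
  · filter_upwards [ae_restrict_mem measurableSet_Ioi] with τ hτ
    rw [mem_Ioi] at hτ
    rw [Real.norm_of_nonneg (by positivity)]
    exact Kb_bound (by positivity) hτ
  · filter_upwards with τ
    fun_prop

lemma psi_tendsto_atTop {s κ : ℝ} (hs : 0 < s) (hκ : 0 < κ) :
    Tendsto (psi s κ) atTop (𝓝 0) := by
  unfold psi Kb
  have h : Tendsto (fun z : ℝ => ∫ τ in Ioi (0:ℝ),
      τ ^ (s - 1) * Real.exp (-τ - κ * z ^ 2 / 4 / τ)) atTop
      (𝓝 (∫ τ in Ioi (0:ℝ), 0)) := by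
    refine tendsto_integral_filter_of_dominated_convergence
      (fun τ : ℝ => τ ^ (s - 1) * Real.exp (-τ))
      (Eventually.of_forall fun z => (Kb_meas s _).aestronglyMeasurable)
      (Eventually.of_forall fun z => ?_) (gam_int hs) ?_
    · filter_upwards [ae_restrict_mem measurableSet_Ioi] with τ hτ
      rw [mem_Ioi] at hτ
      rw [Real.norm_of_nonneg (by positivity)]
      exact Kb_bound (by positivity) hτ
    · filter_upwards [ae_restrict_mem measurableSet_Ioi] with τ hτ
      rw [mem_Ioi] at hτ
      rw [← mul_zero (τ ^ (s - 1))]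
      refine Tendsto.const_mul _ ?_
      refine Real.tendsto_exp_atBot.comp ?_
      have h1 : Tendsto (fun z : ℝ => κ * z ^ 2 / 4 / τ) atTop atTop := by
        refine Tendsto.atTop_div_const hτ (Tendsto.atTop_div_const (by norm_num) ?_)
        exact Tendsto.const_mul_atTop hκ (tendsto_pow_atTop (by norm_num))
      simpa [sub_eq_add_neg] using
        tendsto_atBot_add_const_left _ (-τ) (tendsto_neg_atTop_atBot.comp h1)
  simpa using h.div_const (Real.Gamma s)

lemma betaS_pos {s : ℝ} (hs0 : 0 < s) (hs1 : s < 1) : 0 < betaS s := by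
  have := Real.Gamma_pos_of_pos hs0
  have := Real.Gamma_pos_of_pos (sub_pos.2 hs1)
  unfold betaS; positivity

lemma betaS_symm {s : ℝ} (hs0 : 0 < s) (hs1 : s < 1) : betaS s * betaS (1 - s) = 1 := by
  have := Real.Gamma_pos_of_pos hs0
  have := Real.Gamma_pos_of_pos (sub_pos.2 hs1)
  unfold betaS
  have e : (2:ℝ) ^ (2 * (1 - s) - 1) = ((2:ℝ) ^ (2 * s - 1))⁻¹ := by
    rw [← Real.rpow_neg (by norm_num)]; congr 1; ring
  rw [e, sub_sub_cancel]
  field_simp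

lemma psi_deriv {s κ z : ℝ} (hs0 : 0 < s) (hs1 : s < 1) (hκ : 0 ≤ κ) (hz : 0 < z) :
    HasDerivAt (psi s κ) (-((betaS s)⁻¹ * κ ^ s * z ^ (2 * s - 1) * psi (1 - s) κ z)) z := by
  have g0 := Real.Gamma_pos_of_pos hs0
  have g1 := Real.Gamma_pos_of_pos (sub_pos.2 hs1)
  rcases hκ.eq_or_lt with rfl | hκ
  · rw [Real.zero_rpow hs0.ne']
    have : psi s 0 = fun _ => 1 := funext fun z => psi_zero_left hs0 z
    rw [this]; simpa using hasDerivAt_const z (1:ℝ)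
  have hm : 0 < κ * z ^ 2 / 4 := by positivity
  have h1 : HasDerivAt (fun z : ℝ => κ * z ^ 2 / 4) (κ * z / 2) z := by
    have := ((hasDerivAt_pow 2 z).const_mul κ).div_const 4
    refine this.congr_deriv ?_
    norm_num; ring
  have h2 := ((Kb_deriv hs0 hm).comp z h1).div_const (Real.Gamma s)
  refine h2.congr_deriv ?_
  rw [Kb_inv hm, psi, betaS]
  have e1 : (κ * z ^ 2 / 4) ^ (s - 1) = κ ^ (s - 1) * z ^ (2 * s - 2) * 2 ^ (2 - 2 * s) := by
    have : κ * z ^ 2 / 4 = κ * z ^ (2:ℝ) * 2 ^ (-2 : ℝ) := by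
      rw [Real.rpow_neg (by norm_num)]; norm_num; ring
    rw [this, Real.mul_rpow (by positivity) (by positivity), Real.mul_rpow hκ.le (by positivity),
      ← Real.rpow_mul hz.le, ← Real.rpow_mul (by norm_num)]
    congr 2 <;> ring_nf
  have e2 : κ ^ s = κ ^ (s - 1) * κ := by
    rw [← Real.rpow_add_one hκ.ne']; congr 1; ring
  have e3 : z ^ (2 * s - 1) = z ^ (2 * s - 2) * z := by
    rw [← Real.rpow_add_one hz.ne']; congr 1; ring
  have e4 : (2:ℝ) ^ (2 - 2 * s) = 2 * (2 ^ (2 * s - 1))⁻¹ := by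
    have : (2:ℝ) ^ (2 - 2 * s) = 2 ^ (-(2 * s - 1) + 1) := by congr 1; ring
    rw [this, Real.rpow_add_one (by norm_num), Real.rpow_neg (by norm_num), mul_comm]
  rw [e1, e2, e3, e4]
  field_simp

lemma psi_measurable (s : ℝ) : Measurable (fun p : ℝ × ℝ => psi s p.1 p.2) := by
  unfold psi Kb
  refine Measurable.div_const ?_ _
  have : StronglyMeasurable (fun q : (ℝ × ℝ) × ℝ =>
      q.2 ^ (s - 1) * Real.exp (-q.2 - q.1.1 * q.1.2 ^ 2 / 4 / q.2)) := by
    apply Measurable.stronglyMeasurable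
    fun_prop
  exact (this.integral_prod_right (ν := volume.restrict (Ioi (0:ℝ)))).measurable

/-- the `z`-derivative of `psi` -/
def psiD (s κ z : ℝ) : ℝ := -((betaS s)⁻¹ * κ ^ s * z ^ (2 * s - 1) * psi (1 - s) κ z)

/-- the co-normal derivative `-z^{1-2s} ∂_z psi` -/
def qf (s κ z : ℝ) : ℝ := (betaS s)⁻¹ * κ ^ s * psi (1 - s) κ z

/-- the trilinear symbol -/
def mker (s κ₁ κ₂ κ₃ z : ℝ) : ℝ :=
  psi s κ₃ z * ((κ₁ + κ₂ - κ₃) / 2 * (psi s κ₁ z * psi s κ₂ z) + psiD s κ₁ z * psiD s κ₂ z)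
    * z ^ (1 - 2 * s)

lemma psiD_measurable (s : ℝ) : Measurable (fun p : ℝ × ℝ => psiD s p.1 p.2) := by
  unfold psiD
  have := psi_measurable (1 - s)
  fun_prop

lemma qf_continuous {s κ : ℝ} (hs1 : s < 1) (hκ : 0 ≤ κ) : Continuous (qf s κ) :=
  (psi_continuous (sub_pos.2 hs1) hκ).const_mul _

lemma qf_at_zero {s κ : ℝ} (hs1 : s < 1) : qf s κ 0 = (betaS s)⁻¹ * κ ^ s := by
  rw [qf, psi_at_zero (sub_pos.2 hs1), mul_one]

lemma qf_tendsto {s κ : ℝ} (hs0 : 0 < s) (hs1 : s < 1) (hκ : 0 ≤ κ) :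
    Tendsto (qf s κ) atTop (𝓝 0) := by
  rcases hκ.eq_or_lt with rfl | hκ
  · unfold qf; simp [Real.zero_rpow hs0.ne']
  · unfold qf
    simpa using (psi_tendsto_atTop (sub_pos.2 hs1) hκ).const_mul ((betaS s)⁻¹ * κ ^ s)

lemma qf_deriv {s κ z : ℝ} (hs0 : 0 < s) (hs1 : s < 1) (hκ : 0 ≤ κ) (hz : 0 < z) :
    HasDerivAt (qf s κ) (-(κ * psi s κ z * z ^ (1 - 2 * s))) z := by
  have h := (psi_deriv (s := 1 - s) (sub_pos.2 hs1) (by linarith) hκ hz).const_mul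
    ((betaS s)⁻¹ * κ ^ s)
  refine h.congr_deriv ?_
  have b := betaS_symm hs0 hs1
  have e1 : κ ^ s * κ ^ (1 - s) = κ := by
    rw [← Real.rpow_add' hκ (by norm_num)]; simp
  have e2 : 2 * (1 - s) - 1 = 1 - 2 * s := by ring
  rw [e2, sub_sub_cancel]
  calc _ = -((betaS s * betaS (1 - s))⁻¹ * (κ ^ s * κ ^ (1 - s)) * psi s κ z * z ^ (1 - 2 * s)) := by
        rw [mul_inv]; ring
    _ = _ := by rw [b, e1]; ring

lemma psiD_eq {s κ z : ℝ} (hz : 0 < z) : psiD s κ z * z ^ (1 - 2 * s) = - qf s κ z := by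
  have : z ^ (2 * s - 1) * z ^ (1 - 2 * s) = 1 := by
    rw [← Real.rpow_add hz]; ring_nf; simp
  rw [psiD, qf]
  linear_combination (-((betaS s)⁻¹ * κ ^ s * psi (1 - s) κ z)) * this

lemma qf_nonneg {s κ : ℝ} (hs0 : 0 < s) (hs1 : s < 1) (hκ : 0 ≤ κ) (z : ℝ) : 0 ≤ qf s κ z := by
  have := betaS_pos hs0 hs1
  have := psi_nonneg (sub_pos.2 hs1) κ z
  unfold qf; positivity

lemma qf_le {s κ : ℝ} (hs0 : 0 < s) (hs1 : s < 1) (hκ : 0 ≤ κ) (z : ℝ) :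
    qf s κ z ≤ (betaS s)⁻¹ * κ ^ s := by
  have := betaS_pos hs0 hs1
  exact mul_le_of_le_one_right (by positivity) (psi_le_one (sub_pos.2 hs1) hκ z)

lemma psiD_nonpos {s κ z : ℝ} (hs0 : 0 < s) (hs1 : s < 1) (hκ : 0 ≤ κ) (hz : 0 < z) :
    psiD s κ z ≤ 0 := by
  have := betaS_pos hs0 hs1
  have := psi_nonneg (sub_pos.2 hs1) κ z
  unfold psiD
  rw [neg_nonpos]; positivity

lemma int_psi {s κ : ℝ} (hs0 : 0 < s) (hs1 : s < 1) (hκ : 0 ≤ κ) :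
    IntegrableOn (fun z => κ * psi s κ z * z ^ (1 - 2 * s)) (Ioi 0) ∧
    ∫ z in Ioi (0:ℝ), κ * psi s κ z * z ^ (1 - 2 * s) = (betaS s)⁻¹ * κ ^ s := by
  have hd : ∀ z ∈ Ioi (0:ℝ), HasDerivAt (qf s κ) (-(κ * psi s κ z * z ^ (1 - 2 * s))) z :=
    fun z hz => qf_deriv hs0 hs1 hκ hz
  have hneg : ∀ z ∈ Ioi (0:ℝ), -(κ * psi s κ z * z ^ (1 - 2 * s)) ≤ 0 := by
    intro z hz
    rw [mem_Ioi] at hz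
    have := psi_nonneg hs0 κ z
    rw [neg_nonpos]; positivity
  have hc := (qf_continuous hs1 hκ).continuousWithinAt (s := Ici 0) (x := 0)
  have i1 := integrableOn_Ioi_deriv_of_nonpos hc hd hneg (qf_tendsto hs0 hs1 hκ)
  have i2 := integral_Ioi_of_hasDerivAt_of_nonpos hc hd hneg (qf_tendsto hs0 hs1 hκ)
  rw [integral_neg, qf_at_zero hs1] at i2
  refine ⟨?_, by linarith⟩
  have := i1.neg
  simpa using this

lemma int_psiD {s κ : ℝ} (hs0 : 0 < s) (hs1 : s < 1) (hκ : 0 ≤ κ) :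
    IntegrableOn (fun z => -psiD s κ z) (Ioi 0) ∧
    ∫ z in Ioi (0:ℝ), -psiD s κ z ≤ 1 := by
  rcases hκ.eq_or_lt with rfl | hκ
  · have : ∀ z, psiD s 0 z = 0 := fun z => by simp [psiD, Real.zero_rpow hs0.ne']
    simp [this]
  have hd : ∀ z ∈ Ioi (0:ℝ), HasDerivAt (psi s κ) (psiD s κ z) z :=
    fun z hz => psi_deriv hs0 hs1 hκ.le hz
  have hneg : ∀ z ∈ Ioi (0:ℝ), psiD s κ z ≤ 0 := fun z hz => psiD_nonpos hs0 hs1 hκ.le hz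
  have hc := (psi_continuous hs0 hκ.le).continuousWithinAt (s := Ici 0) (x := 0)
  have i1 := integrableOn_Ioi_deriv_of_nonpos hc hd hneg (psi_tendsto_atTop hs0 hκ)
  have i2 := integral_Ioi_of_hasDerivAt_of_nonpos hc hd hneg (psi_tendsto_atTop hs0 hκ)
  rw [psi_at_zero hs0] at i2
  refine ⟨i1.neg, ?_⟩
  rw [integral_neg]; linarith

lemma mker_measurable (s : ℝ) :
    Measurable (fun p : (ℝ × ℝ × ℝ) × ℝ => mker s p.1.1 p.1.2.1 p.1.2.2 p.2) := by
  unfold mker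
  have h := psi_measurable s
  have h' := psiD_measurable s
  have a1 : Measurable (fun p : (ℝ × ℝ × ℝ) × ℝ => psi s p.1.1 p.2) :=
    h.comp (f := fun p : (ℝ × ℝ × ℝ) × ℝ => (p.1.1, p.2)) (by fun_prop)
  have a2 : Measurable (fun p : (ℝ × ℝ × ℝ) × ℝ => psi s p.1.2.1 p.2) :=
    h.comp (f := fun p : (ℝ × ℝ × ℝ) × ℝ => (p.1.2.1, p.2)) (by fun_prop)
  have a3 : Measurable (fun p : (ℝ × ℝ × ℝ) × ℝ => psi s p.1.2.2 p.2) :=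
    h.comp (f := fun p : (ℝ × ℝ × ℝ) × ℝ => (p.1.2.2, p.2)) (by fun_prop)
  have b1 : Measurable (fun p : (ℝ × ℝ × ℝ) × ℝ => psiD s p.1.1 p.2) :=
    h'.comp (f := fun p : (ℝ × ℝ × ℝ) × ℝ => (p.1.1, p.2)) (by fun_prop)
  have b2 : Measurable (fun p : (ℝ × ℝ × ℝ) × ℝ => psiD s p.1.2.1 p.2) :=
    h'.comp (f := fun p : (ℝ × ℝ × ℝ) × ℝ => (p.1.2.1, p.2)) (by fun_prop)
  fun_prop

lemma mker_main {s κ₁ κ₂ κ₃ : ℝ} (hs0 : 0 < s) (hs1 : s < 1) (h1 : 0 ≤ κ₁) (h2 : 0 ≤ κ₂)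
    (h3 : 0 ≤ κ₃) (h : |κ₁ + κ₂ - κ₃| ≤ κ₁ + κ₂) :
    IntegrableOn (mker s κ₁ κ₂ κ₃) (Ioi 0) ∧
    ∫ z in Ioi (0:ℝ), ‖mker s κ₁ κ₂ κ₃ z‖ ≤ 2 * (betaS s)⁻¹ * (κ₁ ^ s + κ₂ ^ s) ∧
    ∫ z in Ioi (0:ℝ), mker s κ₁ κ₂ κ₃ z
      = (betaS s)⁻¹ * (κ₁ ^ s + κ₂ ^ s - κ₃ ^ s) / 2 := by
  have hb := betaS_pos hs0 hs1
  set g : ℝ → ℝ := fun z => (1 / 2) * (κ₁ * psi s κ₁ z * z ^ (1 - 2 * s))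
    + (1 / 2) * (κ₂ * psi s κ₂ z * z ^ (1 - 2 * s))
    + ((betaS s)⁻¹ * κ₁ ^ s) * (-psiD s κ₂ z) with hg
  have hle : ∀ z ∈ Ioi (0:ℝ), ‖mker s κ₁ κ₂ κ₃ z‖ ≤ g z := by
    intro z hz
    rw [mem_Ioi] at hz
    have p1 := psi_nonneg hs0 κ₁ z
    have p2 := psi_nonneg hs0 κ₂ z
    have p3 := psi_nonneg hs0 κ₃ z
    have l1 := psi_le_one hs0 h1 z
    have l2 := psi_le_one hs0 h2 z
    have l3 := psi_le_one hs0 h3 z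
    have hzp : 0 < z ^ (1 - 2 * s) := by positivity
    have d2 := psiD_nonpos hs0 hs1 h2 hz
    have e : mker s κ₁ κ₂ κ₃ z = psi s κ₃ z * ((κ₁ + κ₂ - κ₃) / 2 * (psi s κ₁ z * psi s κ₂ z)
        * z ^ (1 - 2 * s) + qf s κ₁ z * (- psiD s κ₂ z)) := by
      have := psiD_eq (s := s) (κ := κ₁) hz
      unfold mker
      linear_combination (psi s κ₃ z * psiD s κ₂ z) * this
    rw [e, norm_mul, Real.norm_of_nonneg p3]
    have b1 : ‖(κ₁ + κ₂ - κ₃) / 2 * (psi s κ₁ z * psi s κ₂ z) * z ^ (1 - 2 * s)‖ ≤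
        (1 / 2) * (κ₁ * psi s κ₁ z * z ^ (1 - 2 * s))
        + (1 / 2) * (κ₂ * psi s κ₂ z * z ^ (1 - 2 * s)) := by
      rw [norm_mul, norm_mul, Real.norm_of_nonneg hzp.le, Real.norm_of_nonneg (mul_nonneg p1 p2),
        norm_div, Real.norm_eq_abs, Real.norm_of_nonneg (by norm_num : (0:ℝ) ≤ 2)]
      have : |κ₁ + κ₂ - κ₃| / 2 * (psi s κ₁ z * psi s κ₂ z) ≤
          (1 / 2) * (κ₁ * psi s κ₁ z) + (1 / 2) * (κ₂ * psi s κ₂ z) := by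
        calc |κ₁ + κ₂ - κ₃| / 2 * (psi s κ₁ z * psi s κ₂ z)
            ≤ (κ₁ + κ₂) / 2 * (psi s κ₁ z * psi s κ₂ z) := by gcongr
          _ = 1 / 2 * (κ₁ * psi s κ₁ z) * psi s κ₂ z + 1 / 2 * (κ₂ * psi s κ₂ z) * psi s κ₁ z := by
            ring
          _ ≤ 1 / 2 * (κ₁ * psi s κ₁ z) * 1 + 1 / 2 * (κ₂ * psi s κ₂ z) * 1 := by gcongr
          _ = _ := by ring
      calc _ ≤ ((1 / 2) * (κ₁ * psi s κ₁ z) + (1 / 2) * (κ₂ * psi s κ₂ z)) * z ^ (1 - 2 * s) := by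
            gcongr
        _ = _ := by ring
    have b2 : ‖qf s κ₁ z * (- psiD s κ₂ z)‖ ≤ ((betaS s)⁻¹ * κ₁ ^ s) * (-psiD s κ₂ z) := by
      rw [norm_mul, Real.norm_of_nonneg (qf_nonneg hs0 hs1 h1 z),
        Real.norm_of_nonneg (by linarith : 0 ≤ -psiD s κ₂ z)]
      exact mul_le_mul_of_nonneg_right (qf_le hs0 hs1 h1 z) (by linarith)
    calc _ ≤ 1 * ‖(κ₁ + κ₂ - κ₃) / 2 * (psi s κ₁ z * psi s κ₂ z)
        * z ^ (1 - 2 * s) + qf s κ₁ z * (- psiD s κ₂ z)‖ := by gcongr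
      _ ≤ g z := by
        rw [one_mul]
        exact (norm_add_le _ _).trans (add_le_add b1 b2)
  have i1 := int_psi hs0 hs1 h1
  have i2 := int_psi hs0 hs1 h2
  have i3 := int_psiD hs0 hs1 h2
  have gi : IntegrableOn g (Ioi 0) :=
    ((i1.1.const_mul _).add (i2.1.const_mul _)).add (i3.1.const_mul _)
  have hm : Measurable (mker s κ₁ κ₂ κ₃) :=
    (mker_measurable s).comp (g := fun p : (ℝ × ℝ × ℝ) × ℝ => mker s p.1.1 p.1.2.1 p.1.2.2 p.2)
      (f := fun z : ℝ => ((κ₁, κ₂, κ₃), z)) (by fun_prop)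
  have mi : IntegrableOn (mker s κ₁ κ₂ κ₃) (Ioi 0) := by
    refine Integrable.mono' gi hm.aestronglyMeasurable ?_
    filter_upwards [ae_restrict_mem measurableSet_Ioi] with z hz using hle z hz
  refine ⟨mi, ?_, ?_⟩
  · have : ∫ z in Ioi (0:ℝ), g z = (1 / 2) * ((betaS s)⁻¹ * κ₁ ^ s) + (1 / 2) * ((betaS s)⁻¹ * κ₂ ^ s)
        + ((betaS s)⁻¹ * κ₁ ^ s) * ∫ z in Ioi (0:ℝ), (-psiD s κ₂ z) := by
      refine (integral_add (f := fun z => (1 / 2) * (κ₁ * psi s κ₁ z * z ^ (1 - 2 * s))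
        + (1 / 2) * (κ₂ * psi s κ₂ z * z ^ (1 - 2 * s)))
        ((i1.1.const_mul _).add (i2.1.const_mul _)) (i3.1.const_mul _)).trans ?_
      rw [integral_add (i1.1.const_mul _) (i2.1.const_mul _), integral_const_mul, integral_const_mul,
        integral_const_mul, i1.2, i2.2]
    calc _ ≤ ∫ z in Ioi (0:ℝ), g z := setIntegral_mono_on mi.norm gi measurableSet_Ioi hle
      _ ≤ (1 / 2) * ((betaS s)⁻¹ * κ₁ ^ s) + (1 / 2) * ((betaS s)⁻¹ * κ₂ ^ s)
        + ((betaS s)⁻¹ * κ₁ ^ s) * 1 := by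
          rw [this]; gcongr; exact i3.2
      _ ≤ _ := by
        have : 0 ≤ (betaS s)⁻¹ * κ₁ ^ s := by positivity
        have : 0 ≤ (betaS s)⁻¹ * κ₂ ^ s := by positivity
        nlinarith
  · set f : ℝ → ℝ := fun z => (1 / 2) * (psi s κ₁ z * psi s κ₂ z * qf s κ₃ z
      - qf s κ₁ z * psi s κ₂ z * psi s κ₃ z - psi s κ₁ z * qf s κ₂ z * psi s κ₃ z) with hf
    have c1 := psi_continuous hs0 h1
    have c2 := psi_continuous hs0 h2
    have c3 := psi_continuous hs0 h3
    have q1 := qf_continuous hs1 h1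
    have q2 := qf_continuous hs1 h2
    have q3 := qf_continuous hs1 h3
    have fc : Continuous f := by fun_prop
    have fd : ∀ z ∈ Ioi (0:ℝ), HasDerivAt f (mker s κ₁ κ₂ κ₃ z) z := by
      intro z hz
      rw [mem_Ioi] at hz
      have P1 : HasDerivAt (psi s κ₁) (psiD s κ₁ z) z := psi_deriv hs0 hs1 h1 hz
      have P2 : HasDerivAt (psi s κ₂) (psiD s κ₂ z) z := psi_deriv hs0 hs1 h2 hz
      have P3 : HasDerivAt (psi s κ₃) (psiD s κ₃ z) z := psi_deriv hs0 hs1 h3 hz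
      have Q1 := qf_deriv hs0 hs1 h1 hz
      have Q2 := qf_deriv hs0 hs1 h2 hz
      have Q3 := qf_deriv hs0 hs1 h3 hz
      have := ((((P1.mul P2).mul Q3).sub ((Q1.mul P2).mul P3)).sub ((P1.mul Q2).mul P3)).const_mul
        (1 / 2)
      refine this.congr_deriv ?_
      have E1 := psiD_eq (s := s) (κ := κ₁) hz
      have E2 := psiD_eq (s := s) (κ := κ₂) hz
      have E3 := psiD_eq (s := s) (κ := κ₃) hz
      simp only [Pi.mul_apply]
      rw [← neg_eq_iff_eq_neg] at E1 E2 E3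
      rw [← E1, ← E2, ← E3]
      unfold mker
      ring
    have b : ∀ κ, 0 ≤ κ → ∀ᶠ z in atTop, ‖psi s κ z‖ ≤ 1 := fun κ hκ => Eventually.of_forall
      fun z => by rw [Real.norm_of_nonneg (psi_nonneg hs0 κ z)]; exact psi_le_one hs0 hκ z
    have bb : ∀ κ κ', 0 ≤ κ → 0 ≤ κ' → IsBoundedUnder (· ≤ ·) atTop
        (norm ∘ fun z => psi s κ z * psi s κ' z) := fun κ κ' hκ hκ' => by
      refine isBoundedUnder_of ⟨1, fun z => ?_⟩
      simp only [Function.comp]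
      rw [Real.norm_of_nonneg (mul_nonneg (psi_nonneg hs0 κ z) (psi_nonneg hs0 κ' z))]
      exact mul_le_one₀ (psi_le_one hs0 hκ z) (psi_nonneg hs0 κ' z) (psi_le_one hs0 hκ' z)
    have ft : Tendsto f atTop (𝓝 0) := by
      have t1 := (qf_tendsto hs0 hs1 h3).zero_mul_isBoundedUnder_le (bb κ₁ κ₂ h1 h2)
      have t2 := (qf_tendsto hs0 hs1 h1).zero_mul_isBoundedUnder_le (bb κ₂ κ₃ h2 h3)
      have t3 := (qf_tendsto hs0 hs1 h2).zero_mul_isBoundedUnder_le (bb κ₁ κ₃ h1 h3)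
      have := ((t1.sub t2).sub t3).const_mul (1 / 2)
      simp only [sub_zero, mul_zero] at this
      refine this.congr fun z => ?_
      rw [hf]; ring
    rw [integral_Ioi_of_hasDerivAt_of_tendsto fc.continuousWithinAt fd mi ft, hf]
    simp only [psi_at_zero hs0, qf_at_zero hs1]
    ring

/-- the plane wave `e^{i k·y}` -/
def ek {n : ℕ} (k y : En n) : ℂ := Complex.exp (((inner ℝ k y : ℝ) : ℂ) * Complex.I)

lemma norm_ek {n : ℕ} (k y : En n) : ‖ek k y‖ = 1 := Complex.norm_exp_ofReal_mul_I _

lemma ek_add {n : ℕ} (k y y' : En n) : ek k (y + y') = ek k y * ek k y' := by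
  rw [ek, ek, ek, ← Complex.exp_add, inner_add_right]; push_cast; ring_nf

lemma ek_add_left {n : ℕ} (k k' y : En n) : ek (k + k') y = ek k y * ek k' y := by
  rw [ek, ek, ek, ← Complex.exp_add, inner_add_left]; push_cast; ring_nf

lemma ek_neg {n : ℕ} (k y : En n) : ek k (-y) = ek (-k) y := by
  rw [ek, ek, inner_neg_right, inner_neg_left]

lemma ek_continuous {n : ℕ} : Continuous (fun p : En n × En n => ek p.1 p.2) := by
  unfold ek; fun_prop

lemma ek_continuous_right {n : ℕ} (k : En n) : Continuous (ek k) := by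
  unfold ek; fun_prop

lemma gauss_integrable {n : ℕ} {t : ℝ} (ht : 0 < t) :
    Integrable (fun y : En n => Real.exp (-t * ‖y‖ ^ 2)) := by
  have := (GaussianFourier.integrable_cexp_neg_mul_sq_norm_add (V := En n) (b := (t:ℂ))
    (by simpa using ht) 0 0).re
  refine this.congr (Eventually.of_forall fun y => ?_)
  have : (-(t:ℂ) * (‖y‖:ℂ) ^ 2 + 0 * ((inner ℝ (0 : En n) y : ℝ) : ℂ))
    = ((-t * ‖y‖ ^ 2 : ℝ) : ℂ) := by push_cast; ring
  simp only [this]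
  rw [← Complex.ofReal_exp]
  exact Complex.ofReal_re _

lemma gauss_real {n : ℕ} {t : ℝ} (ht : 0 < t) :
    ∫ y : En n, Real.exp (-t * ‖y‖ ^ 2) = (Real.pi / t) ^ ((n:ℝ) / 2) := by
  have := GaussianFourier.integral_rexp_neg_mul_sq_norm (V := En n) ht
  simpa using this

lemma gauss_ek {n : ℕ} {t : ℝ} (ht : 0 < t) (k : En n) :
    ∫ y : En n, (Real.exp (-t * ‖y‖ ^ 2) : ℂ) * ek k y =
      (((Real.pi / t) ^ ((n:ℝ) / 2) * Real.exp (-(‖k‖ ^ 2 / (4 * t))) : ℝ) : ℂ) := by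
  have := GaussianFourier.integral_cexp_neg_mul_sq_norm_add (V := En n) (b := (t:ℂ))
    (by simpa using ht) Complex.I k
  convert! this using 1
  · congr 1; ext y
    rw [ek, Complex.ofReal_exp, ← Complex.exp_add]
    push_cast; ring_nf
  · push_cast
    rw [Complex.ofReal_cpow (by positivity)]
    congr 1
    · push_cast; simp
    · congr 1; rw [Complex.I_sq]; ring

lemma Pker_eq {n : ℕ} {s z : ℝ} (hs : 0 < s) (hz : 0 < z) (y : En n) :
    Pker n s z y = ∫ t in Ioi (0:ℝ), (pns n s * z ^ (2 * s) / Real.Gamma ((n:ℝ) / 2 + s)) *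
      (t ^ ((n:ℝ) / 2 + s - 1) * Real.exp (-((‖y‖ ^ 2 + z ^ 2) * t))) := by
  have ha : 0 < (n:ℝ) / 2 + s := by positivity
  have hr : 0 < ‖y‖ ^ 2 + z ^ 2 := by positivity
  rw [integral_const_mul, Real.integral_rpow_mul_exp_neg_mul_Ioi ha hr, Pker]
  have : 0 < Real.Gamma ((n:ℝ) / 2 + s) := Real.Gamma_pos_of_pos ha
  have e : (‖y‖ ^ 2 + z ^ 2) ^ (-((n:ℝ) + 2 * s) / 2) = (1 / (‖y‖ ^ 2 + z ^ 2)) ^ ((n:ℝ) / 2 + s) := by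
    rw [one_div, Real.inv_rpow hr.le, ← Real.rpow_neg hr.le]; congr 1; ring
  rw [e]; field_simp

lemma exp_int {s r : ℝ} (hs : 0 < s) (hr : 0 < r) :
    IntegrableOn (fun t : ℝ => t ^ (s - 1) * Real.exp (-(r * t))) (Ioi 0) := by
  have h := (gam_int hs)
  have := (integrableOn_Ioi_comp_mul_left_iff
    (fun τ : ℝ => τ ^ (s - 1) * Real.exp (-τ)) 0 hr).2 (by simpa using h)
  refine (this.const_mul ((r ^ (s - 1))⁻¹)).congr ?_
  filter_upwards [ae_restrict_mem measurableSet_Ioi] with t ht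
  rw [mem_Ioi] at ht
  rw [Real.mul_rpow hr.le ht.le]
  have : 0 < r ^ (s - 1) := by positivity
  field_simp

lemma psi_alt {s κ z : ℝ} (hz : 0 < z) :
    psi s κ z = (z ^ (2 * s) / Real.Gamma s) *
      ∫ t in Ioi (0:ℝ), t ^ (s - 1) * Real.exp (-(z ^ 2 * t)) * Real.exp (-(κ / (4 * t))) := by
  rw [psi, Kb]
  have h := integral_comp_mul_left_Ioi
    (fun τ : ℝ => τ ^ (s - 1) * Real.exp (-τ - κ * z ^ 2 / 4 / τ)) 0 (b := z ^ 2) (by positivity)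
  rw [mul_zero, smul_eq_mul] at h
  have h' : ∫ τ in Ioi (0:ℝ), τ ^ (s - 1) * Real.exp (-τ - κ * z ^ 2 / 4 / τ) = z ^ 2 *
      ∫ τ in Ioi (0:ℝ), (z ^ 2 * τ) ^ (s - 1) * Real.exp (-(z ^ 2 * τ) - κ * z ^ 2 / 4 / (z ^ 2 * τ)) := by
    rw [h, ← mul_assoc, mul_inv_cancel₀ (by positivity), one_mul]
  rw [h', ← integral_const_mul, div_mul_eq_mul_div, ← integral_const_mul]
  congr 1
  refine setIntegral_congr_fun measurableSet_Ioi fun t ht => ?_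
  rw [mem_Ioi] at ht
  have e1 : -(z ^ 2 * t) - κ * z ^ 2 / 4 / (z ^ 2 * t) = -(z ^ 2 * t) + -(κ / (4 * t)) := by
    field_simp; ring
  have e2 : z ^ (2 * s) = z ^ 2 * (z ^ 2) ^ (s - 1) := by
    rw [← Real.rpow_natCast, ← Real.rpow_mul hz.le, ← Real.rpow_add hz]
    congr 1; push_cast; ring
  rw [e1, Real.exp_add, e2, Real.mul_rpow (by positivity) ht.le]
  ring

lemma Pker_continuous {n : ℕ} {s z : ℝ} (hz : 0 < z) : Continuous (Pker n s z) := by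
  unfold Pker
  refine continuous_const.mul (Continuous.rpow_const (by fun_prop) fun y => Or.inl ?_)
  positivity

lemma pns_pos {n : ℕ} {s : ℝ} (hs : 0 < s) : 0 < pns n s := by
  have := Real.Gamma_pos_of_pos hs
  have : 0 < Real.Gamma ((n:ℝ) / 2 + s) := Real.Gamma_pos_of_pos (by positivity)
  have := Real.pi_pos
  unfold pns; positivity

lemma Pker_fourier {n : ℕ} {s z : ℝ} (hs : 0 < s) (hz : 0 < z) (k : En n) :
    Integrable (Pker n s z) ∧ ∫ y, (Pker n s z y : ℂ) * ek k y = (psi s (‖k‖ ^ 2) z : ℂ) := by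
  set c := pns n s * z ^ (2 * s) / Real.Gamma ((n:ℝ) / 2 + s) with hc
  have ga : 0 < Real.Gamma ((n:ℝ) / 2 + s) := Real.Gamma_pos_of_pos (by positivity)
  have hc0 : 0 < c := by have := pns_pos (n := n) hs; positivity
  let R : En n → ℝ → ℝ := fun y t =>
    c * (t ^ ((n:ℝ) / 2 + s - 1) * Real.exp (-((‖y‖ ^ 2 + z ^ 2) * t)))
  have Rm : Measurable (Function.uncurry R) := by
    simp only [R, Function.uncurry_def]
    fun_prop
  have Req : ∀ y : En n, ∀ t : ℝ, R y t = (c * t ^ ((n:ℝ) / 2 + s - 1) * Real.exp (-(z ^ 2 * t))) *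
      Real.exp (-t * ‖y‖ ^ 2) := by
    intro y t
    have : -((‖y‖ ^ 2 + z ^ 2) * t) = -(z ^ 2 * t) + -t * ‖y‖ ^ 2 := by ring
    simp only [R]
    rw [this, Real.exp_add]; ring
  have hpow : ∀ t : ℝ, 0 < t → t ^ ((n:ℝ) / 2 + s - 1) * (Real.pi / t) ^ ((n:ℝ) / 2)
      = Real.pi ^ ((n:ℝ) / 2) * t ^ (s - 1) := by
    intro t ht
    rw [Real.div_rpow Real.pi_pos.le ht.le]
    have : t ^ ((n:ℝ) / 2 + s - 1) = t ^ (s - 1) * t ^ ((n:ℝ) / 2) := by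
      rw [← Real.rpow_add ht]; congr 1; ring
    rw [this]
    have : 0 < t ^ ((n:ℝ) / 2) := by positivity
    field_simp
  have Rint : Integrable (Function.uncurry R) (volume.prod (volume.restrict (Ioi (0:ℝ)))) := by
    rw [integrable_prod_iff' Rm.aestronglyMeasurable]
    constructor
    · filter_upwards [ae_restrict_mem measurableSet_Ioi] with t ht
      simp only [Function.uncurry_apply_pair, Req]
      exact (gauss_integrable ht).const_mul _
    · refine ((exp_int hs (r := z ^ 2) (by positivity)).const_mul
        (c * Real.pi ^ ((n:ℝ) / 2))).congr ?_
      filter_upwards [ae_restrict_mem measurableSet_Ioi] with t ht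
      rw [mem_Ioi] at ht
      have : ∀ y : En n, ‖Function.uncurry R (y, t)‖ = (c * t ^ ((n:ℝ) / 2 + s - 1) *
          Real.exp (-(z ^ 2 * t))) * Real.exp (-t * ‖y‖ ^ 2) := fun y => by
        rw [Function.uncurry_apply_pair, Req, Real.norm_of_nonneg (by positivity)]
      simp only [this]
      rw [integral_const_mul, gauss_real ht]
      linear_combination (-c * Real.exp (-(z ^ 2 * t))) * hpow t ht
  have Pint : Integrable (Pker n s z) := by
    refine Rint.integral_prod_left.congr (Eventually.of_forall fun y => ?_)
    exact (Pker_eq hs hz y).symm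
  refine ⟨Pint, ?_⟩
  have Cint : Integrable (Function.uncurry fun (y : En n) (t : ℝ) => (R y t : ℂ) * ek k y)
      (volume.prod (volume.restrict (Ioi (0:ℝ)))) := by
    refine Rint.norm.mono' ?_ (Eventually.of_forall fun p => ?_)
    · apply Measurable.aestronglyMeasurable
      have h1 : Measurable fun p : En n × ℝ => R p.1 p.2 := Rm
      have h2 : Measurable fun p : En n × ℝ => ek k p.1 :=
        (ek_continuous_right k).measurable.comp measurable_fst
      exact (Complex.measurable_ofReal.comp h1).mul h2
    · simp [Function.uncurry_def, norm_ek]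
  calc ∫ y, (Pker n s z y : ℂ) * ek k y
      = ∫ y, ∫ t in Ioi (0:ℝ), (R y t : ℂ) * ek k y := by
        congr 1; ext y
        rw [Pker_eq hs hz y, ← integral_complex_ofReal, ← integral_mul_const]
    _ = ∫ t in Ioi (0:ℝ), ∫ y, (R y t : ℂ) * ek k y := integral_integral_swap Cint
    _ = ∫ t in Ioi (0:ℝ), (((z ^ (2 * s) / Real.Gamma s) *
      (t ^ (s - 1) * Real.exp (-(z ^ 2 * t)) * Real.exp (-(‖k‖ ^ 2 / (4 * t)))) : ℝ) : ℂ) := by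
        refine setIntegral_congr_fun measurableSet_Ioi fun t ht => ?_
        rw [mem_Ioi] at ht
        simp only [Req]
        have : ∀ y : En n, (((c * t ^ ((n:ℝ) / 2 + s - 1) * Real.exp (-(z ^ 2 * t))) *
          Real.exp (-t * ‖y‖ ^ 2) : ℝ) : ℂ) * ek k y = ((c * t ^ ((n:ℝ) / 2 + s - 1) *
          Real.exp (-(z ^ 2 * t)) : ℝ) : ℂ) * ((Real.exp (-t * ‖y‖ ^ 2) : ℂ) * ek k y) := by
          intro y; push_cast; ring
        simp only [this]
        rw [integral_const_mul, gauss_ek ht k, ← Complex.ofReal_mul]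
        congr 1
        have hcc : c * Real.pi ^ ((n:ℝ) / 2) = z ^ (2 * s) / Real.Gamma s := by
          have := Real.Gamma_pos_of_pos hs
          have := Real.pi_pos
          rw [hc, pns]; field_simp
        rw [← hcc]
        linear_combination (c * Real.exp (-(z ^ 2 * t)) * Real.exp (-(‖k‖ ^ 2 / (4 * t)))) * hpow t ht
    _ = _ := by
        rw [integral_complex_ofReal, integral_const_mul, ← psi_alt hz]

/-- Poisson convolution acts diagonally on superpositions of plane waves. -/
lemma Pconv_rep {n : ℕ} {s z : ℝ} (hs : 0 < s) (hz : 0 < z) {Ω : Type*} [MeasurableSpace Ω]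
    {μ : Measure Ω} [SFinite μ] {c : Ω → ℂ} {k : Ω → En n} (hc : Integrable c μ)
    (hk : Measurable k) {w : En n → ℝ} (hw : ∀ y, (w y : ℂ) = ∫ ω, c ω * ek (k ω) y ∂μ)
    (x : En n) :
    (Pconv n s z w x : ℂ) = ∫ ω, c ω * (psi s (‖k ω‖ ^ 2) z : ℂ) * ek (k ω) x ∂μ := by
  have hP : Integrable (Pker n s z) := (Pker_fourier hs hz 0).1
  have e0 : Pconv n s z w x = ∫ y, Pker n s z y * w (x - y) := by
    rw [Pconv, ← integral_sub_left_eq_self _ volume x]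
    simp
  have Cint : Integrable (Function.uncurry fun (y : En n) (ω : Ω) =>
      (Pker n s z y : ℂ) * (c ω * ek (k ω) (x - y))) (volume.prod μ) := by
    have h1 : Integrable (fun p : En n × Ω => (Pker n s z p.1 : ℂ) * c p.2) (volume.prod μ) :=
      hP.ofReal.mul_prod hc
    refine h1.norm.mono' ?_ (Eventually.of_forall fun p => ?_)
    · have h2 : Measurable fun p : En n × Ω => ek (k p.2) (x - p.1) :=
        ek_continuous.measurable.comp (f := fun p : En n × Ω => (k p.2, x - p.1)) (by fun_prop)
      refine (h1.aestronglyMeasurable.mul h2.aestronglyMeasurable).congr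
        (Eventually.of_forall fun p => ?_)
      simp [Function.uncurry_def, mul_assoc]
    · simp [Function.uncurry_def, norm_ek]
  rw [e0, ← integral_complex_ofReal]
  calc ∫ y, ((Pker n s z y * w (x - y) : ℝ) : ℂ)
      = ∫ y, ∫ ω, (Pker n s z y : ℂ) * (c ω * ek (k ω) (x - y)) ∂μ := by
        congr 1; ext y
        rw [Complex.ofReal_mul, hw, integral_const_mul]
    _ = ∫ ω, (∫ y, (Pker n s z y : ℂ) * (c ω * ek (k ω) (x - y))) ∂μ := integral_integral_swap Cint
    _ = _ := by
        congr 1; ext ω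
        have : ∀ y, (Pker n s z y : ℂ) * (c ω * ek (k ω) (x - y))
            = (c ω * ek (k ω) x) * ((Pker n s z y : ℂ) * ek (-k ω) y) := by
          intro y
          rw [sub_eq_add_neg, ek_add, ek_neg]; ring
        simp only [this]
        rw [integral_const_mul, (Pker_fourier hs hz (-k ω)).2, norm_neg]
        ring

lemma levy_aux {s m : ℝ} (hs0 : 0 < s) (hs1 : s < 1) (hm : 0 < m) :
    IntegrableOn (fun τ : ℝ => τ ^ (-s - 1) * (1 - Real.exp (-(m * τ)))) (Ioi 0) ∧
    ∫ τ in Ioi (0:ℝ), τ ^ (-s - 1) * (1 - Real.exp (-(m * τ))) = m ^ s * Real.Gamma (1 - s) / s := by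
  have e0 : ∀ τ : ℝ, 0 ≤ τ → 0 ≤ 1 - Real.exp (-(m * τ)) := fun τ hτ => by
    rw [sub_nonneg, Real.exp_le_one_iff, neg_nonpos]; positivity
  have e1 : ∀ τ : ℝ, 1 - Real.exp (-(m * τ)) ≤ m * τ := fun τ => by
    have := Real.add_one_le_exp (-(m * τ)); linarith
  have e2 : ∀ τ : ℝ, 1 - Real.exp (-(m * τ)) ≤ 1 := fun τ => by
    have := Real.exp_pos (-(m * τ)); linarith
  have Am : Measurable (fun τ : ℝ => τ ^ (-s - 1) * (1 - Real.exp (-(m * τ)))) := by fun_prop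
  have Ai : IntegrableOn (fun τ : ℝ => τ ^ (-s - 1) * (1 - Real.exp (-(m * τ)))) (Ioi 0) := by
    rw [← Ioc_union_Ioi_eq_Ioi (zero_le_one (α := ℝ))]
    refine IntegrableOn.union ?_ ?_
    · have : IntegrableOn (fun τ : ℝ => τ ^ (-s)) (Ioc 0 1) := by
        rw [← intervalIntegrable_iff_integrableOn_Ioc_of_le zero_le_one]
        exact intervalIntegral.intervalIntegrable_rpow' (by linarith)
      refine Integrable.mono' (this.const_mul m) Am.aestronglyMeasurable ?_
      filter_upwards [ae_restrict_mem measurableSet_Ioc] with τ hτ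
      have hp := hτ.1
      rw [Real.norm_of_nonneg (mul_nonneg (by positivity) (e0 τ hp.le))]
      have : m * τ ^ (-s) = τ ^ (-s - 1) * (m * τ) := by
        rw [Real.rpow_sub_one hp.ne']; field_simp
      rw [this]
      gcongr
      exact e1 τ
    · refine Integrable.mono' (integrableOn_Ioi_rpow_of_lt (a := -s - 1) (by linarith) one_pos)
        Am.aestronglyMeasurable ?_
      filter_upwards [ae_restrict_mem measurableSet_Ioi] with τ hτ
      have hp : 0 < τ := lt_trans one_pos hτ
      rw [Real.norm_of_nonneg (mul_nonneg (by positivity) (e0 τ hp.le))]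
      exact mul_le_of_le_one_right (by positivity) (e2 τ)
  refine ⟨Ai, ?_⟩
  have Bi : IntegrableOn (fun τ : ℝ => (m / s) * (τ ^ (1 - s - 1) * Real.exp (-(m * τ)))) (Ioi 0) :=
    (exp_int (sub_pos.2 hs1) hm).const_mul _
  set f : ℝ → ℝ := fun τ => -(1 / s) * (τ ^ (-s) * (1 - Real.exp (-(m * τ)))) with hf
  have fd : ∀ τ ∈ Ioi (0:ℝ), HasDerivAt f (τ ^ (-s - 1) * (1 - Real.exp (-(m * τ)))
      - (m / s) * (τ ^ (1 - s - 1) * Real.exp (-(m * τ)))) τ := by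
    intro τ hτ
    rw [mem_Ioi] at hτ
    have h1 := Real.hasDerivAt_rpow_const (x := τ) (p := -s) (Or.inl hτ.ne')
    have h2 : HasDerivAt (fun τ : ℝ => 1 - Real.exp (-(m * τ))) (m * Real.exp (-(m * τ))) τ := by
      have h3 : HasDerivAt (fun τ : ℝ => -(m * τ)) (-m) τ := by
        simpa using ((hasDerivAt_id τ).const_mul (-m))
      refine (h3.exp.const_sub 1).congr_deriv ?_
      ring
    refine ((h1.mul h2).const_mul (-(1 / s))).congr_deriv ?_
    have : 1 - s - 1 = -s := by ring
    rw [this]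
    field_simp
    ring
  have fc : ContinuousWithinAt f (Ici 0) 0 := by
    have f0 : f 0 = 0 := by simp [hf]
    rw [ContinuousWithinAt, f0]
    have h1 : Tendsto (fun τ : ℝ => (m / s) * τ ^ (1 - s)) (𝓝[Ici 0] 0) (𝓝 0) := by
      have : ContinuousAt (fun τ : ℝ => (m / s) * τ ^ (1 - s)) 0 :=
        (Real.continuousAt_rpow_const 0 (1 - s) (Or.inr (by linarith))).const_mul _
      have := this.tendsto
      rw [Real.zero_rpow (by linarith), mul_zero] at this
      exact this.mono_left nhdsWithin_le_nhds
    refine squeeze_zero_norm' ?_ h1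
    filter_upwards [self_mem_nhdsWithin] with τ hτ
    rw [mem_Ici] at hτ
    rcases hτ.eq_or_lt with rfl | hτ
    · rw [f0, Real.zero_rpow (by linarith)]; simp
    have : (m / s) * τ ^ (1 - s) = (1 / s) * (τ ^ (-s) * (m * τ)) := by
      have : 1 - s = -s + 1 := by ring
      rw [this, Real.rpow_add_one hτ.ne']; ring
    rw [this, hf]
    simp only
    rw [norm_mul, norm_neg, Real.norm_of_nonneg (by positivity : 0 ≤ 1 / s),
      Real.norm_of_nonneg (mul_nonneg (by positivity) (e0 τ hτ.le))]
    gcongr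
    exact e1 τ
  have ft : Tendsto f atTop (𝓝 0) := by
    have h1 : Tendsto (fun τ : ℝ => (1 / s) * τ ^ (-s)) atTop (𝓝 0) := by
      simpa using (tendsto_rpow_neg_atTop hs0).const_mul (1 / s)
    refine squeeze_zero_norm' ?_ h1
    filter_upwards [eventually_gt_atTop 0] with τ hτ
    rw [hf]
    simp only
    rw [norm_mul, norm_neg, Real.norm_of_nonneg (by positivity : 0 ≤ 1 / s),
      Real.norm_of_nonneg (mul_nonneg (by positivity) (e0 τ hτ.le))]
    gcongr
    exact mul_le_of_le_one_right (by positivity) (e2 τ)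
  have key := integral_Ioi_of_hasDerivAt_of_tendsto fc fd (Ai.sub Bi) ft
  rw [integral_sub Ai Bi, integral_const_mul,
    Real.integral_rpow_mul_exp_neg_mul_Ioi (sub_pos.2 hs1) hm] at key
  have f0 : f 0 = 0 := by simp [hf]
  rw [f0] at key
  have e3 : (1 / m) ^ (1 - s) = m ^ s / m := by
    rw [one_div, Real.inv_rpow hm.le, ← Real.rpow_neg hm.le, ← Real.rpow_sub_one hm.ne']
    congr 1; ring
  rw [e3] at key
  have : m / s * (m ^ s / m * Real.Gamma (1 - s)) = m ^ s * Real.Gamma (1 - s) / s := by field_simp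
  linarith

lemma levy_int {s m : ℝ} (hs0 : 0 < s) (hs1 : s < 1) (hm : 0 ≤ m) :
    IntegrableOn (fun t : ℝ => t ^ (s - 1) * (1 - Real.exp (-(m / t)))) (Ioi 0) ∧
    ∫ t in Ioi (0:ℝ), t ^ (s - 1) * (1 - Real.exp (-(m / t))) = m ^ s * Real.Gamma (1 - s) / s := by
  rcases hm.eq_or_lt with rfl | hm
  · simp [Real.zero_rpow hs0.ne']
  have h := levy_aux hs0 hs1 hm
  have e : ∀ t ∈ Ioi (0:ℝ), t ^ (-2 : ℝ) * (t⁻¹ ^ (s - 1) * (1 - Real.exp (-(m / t⁻¹))))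
      = t ^ (-s - 1) * (1 - Real.exp (-(m * t))) := by
    intro t ht
    rw [mem_Ioi] at ht
    rw [Real.inv_rpow ht.le, ← Real.rpow_neg ht.le, ← mul_assoc, ← Real.rpow_add ht, div_inv_eq_mul]
    congr 2; ring
  constructor
  · rw [← integrableOn_Ioi_comp_rpow_iff _ (p := -1) (by norm_num)]
    refine h.1.congr_fun (fun t ht => ?_) measurableSet_Ioi
    simp only [smul_eq_mul, Real.rpow_neg_one]
    rw [← e t ht]
    norm_num
  · rw [integral_inv_Ioi, ← h.2]
    exact setIntegral_congr_fun measurableSet_Ioi e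

lemma Cns_pos {n : ℕ} {s : ℝ} (hs0 : 0 < s) (hs1 : s < 1) : 0 < Cns n s ∧
    |Real.Gamma (-s)| = Real.Gamma (1 - s) / s := by
  have h1 : 0 < Real.Gamma (1 - s) := Real.Gamma_pos_of_pos (by linarith)
  have h2 : Real.Gamma (1 - s) = -s * Real.Gamma (-s) := by
    have := Real.Gamma_add_one (s := -s) (by linarith)
    rw [← this]; congr 1; ring
  have h3 : |Real.Gamma (-s)| = Real.Gamma (1 - s) / s := by
    have : Real.Gamma (-s) = -(Real.Gamma (1 - s) / s) := by rw [h2]; field_simp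
    rw [this, abs_neg, abs_of_pos (by positivity)]
  refine ⟨?_, h3⟩
  rw [Cns, h3]
  have : 0 < Real.Gamma ((n:ℝ) / 2 + s) := Real.Gamma_pos_of_pos (by positivity)
  have := Real.pi_pos
  positivity

lemma gauss_cos {n : ℕ} {t : ℝ} (ht : 0 < t) (k : En n) :
    Integrable (fun y : En n => Real.exp (-t * ‖y‖ ^ 2) * (1 - Real.cos (inner ℝ k y))) ∧
    ∫ y : En n, Real.exp (-t * ‖y‖ ^ 2) * (1 - Real.cos (inner ℝ k y)) =
      (Real.pi / t) ^ ((n:ℝ) / 2) * (1 - Real.exp (-(‖k‖ ^ 2 / (4 * t)))) := by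
  have gi := gauss_integrable (n := n) ht
  have ci : Integrable (fun y : En n => Real.exp (-t * ‖y‖ ^ 2) * Real.cos (inner ℝ k y)) := by
    refine gi.mono' (by fun_prop) (Eventually.of_forall fun y => ?_)
    rw [norm_mul, Real.norm_of_nonneg (by positivity)]
    exact mul_le_of_le_one_right (by positivity) (Real.abs_cos_le_one _)
  have ei : Integrable (fun y : En n => (Real.exp (-t * ‖y‖ ^ 2) : ℂ) * ek k y) := by
    refine gi.mono' ((by fun_prop : Continuous fun y : En n =>
      (Real.exp (-t * ‖y‖ ^ 2) : ℂ)).mul (ek_continuous_right k)).aestronglyMeasurable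
      (Eventually.of_forall fun y => ?_)
    rw [norm_mul, norm_ek, mul_one, Complex.norm_real, Real.norm_of_nonneg (by positivity)]
  have h := gauss_ek ht k
  have hre := congrArg Complex.re h
  rw [Complex.ofReal_re] at hre
  have h2 : (∫ y : En n, (Real.exp (-t * ‖y‖ ^ 2) : ℂ) * ek k y).re
      = ∫ y : En n, Real.exp (-t * ‖y‖ ^ 2) * Real.cos (inner ℝ k y) := by
    refine (integral_re ei).symm.trans ?_
    congr 1; ext y
    change ((Real.exp (-t * ‖y‖ ^ 2) : ℂ) * ek k y).re = _
    rw [Complex.re_ofReal_mul, ek, Complex.exp_ofReal_mul_I_re]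
  rw [h2] at hre
  have e : (fun y : En n => Real.exp (-t * ‖y‖ ^ 2) * (1 - Real.cos (inner ℝ k y)))
    = fun y : En n => Real.exp (-t * ‖y‖ ^ 2) - Real.exp (-t * ‖y‖ ^ 2) * Real.cos (inner ℝ k y) := by
    ext y; ring
  rw [e]
  refine ⟨gi.sub ci, ?_⟩
  rw [integral_sub gi ci, hre, gauss_real ht]; ring

lemma levy_khintchine {n : ℕ} {s : ℝ} (hs0 : 0 < s) (hs1 : s < 1) (k : En n) :
    Integrable (fun y : En n => (1 - Real.cos (inner ℝ k y)) / ‖y‖ ^ ((n:ℝ) + 2 * s)) ∧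
    ∫ y : En n, (1 - Real.cos (inner ℝ k y)) / ‖y‖ ^ ((n:ℝ) + 2 * s)
      = (Cns n s)⁻¹ * (‖k‖ ^ 2) ^ s := by
  have ha : 0 < (n:ℝ) / 2 + s := by positivity
  have ga : 0 < Real.Gamma ((n:ℝ) / 2 + s) := Real.Gamma_pos_of_pos ha
  set G := Real.Gamma ((n:ℝ) / 2 + s) with hG
  have cn : ∀ y : En n, 0 ≤ 1 - Real.cos (inner ℝ k y) := fun y =>
    sub_nonneg.2 (Real.cos_le_one _)
  let H : En n → ℝ → ℝ := fun y t => (G⁻¹ * t ^ ((n:ℝ) / 2 + s - 1)) *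
    (Real.exp (-t * ‖y‖ ^ 2) * (1 - Real.cos (inner ℝ k y)))
  have Hm : Measurable (Function.uncurry H) := by
    simp only [H, Function.uncurry_def]
    fun_prop
  have hpow : ∀ t : ℝ, 0 < t → t ^ ((n:ℝ) / 2 + s - 1) * (Real.pi / t) ^ ((n:ℝ) / 2)
      = Real.pi ^ ((n:ℝ) / 2) * t ^ (s - 1) := by
    intro t ht
    rw [Real.div_rpow Real.pi_pos.le ht.le]
    have : t ^ ((n:ℝ) / 2 + s - 1) = t ^ (s - 1) * t ^ ((n:ℝ) / 2) := by
      rw [← Real.rpow_add ht]; congr 1; ring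
    rw [this]
    have : 0 < t ^ ((n:ℝ) / 2) := by positivity
    field_simp
  have hy : ∀ t ∈ Ioi (0:ℝ), ∫ y, H y t = (G⁻¹ * Real.pi ^ ((n:ℝ) / 2)) *
      (t ^ (s - 1) * (1 - Real.exp (-(‖k‖ ^ 2 / 4 / t)))) := by
    intro t ht
    rw [mem_Ioi] at ht
    simp only [H]
    rw [integral_const_mul, (gauss_cos ht k).2, div_div]
    linear_combination (G⁻¹ * (1 - Real.exp (-(‖k‖ ^ 2 / (4 * t))))) * hpow t ht
  have lv := levy_int hs0 hs1 (m := ‖k‖ ^ 2 / 4) (by positivity)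
  have Hint : Integrable (Function.uncurry H) (volume.prod (volume.restrict (Ioi (0:ℝ)))) := by
    rw [integrable_prod_iff' Hm.aestronglyMeasurable]
    constructor
    · filter_upwards [ae_restrict_mem measurableSet_Ioi] with t ht
      exact (gauss_cos ht k).1.const_mul (G⁻¹ * t ^ ((n:ℝ) / 2 + s - 1))
    · refine (lv.1.const_mul (G⁻¹ * Real.pi ^ ((n:ℝ) / 2))).congr ?_
      filter_upwards [ae_restrict_mem measurableSet_Ioi] with t ht
      rw [← hy t ht]
      congr 1; ext y
      rw [mem_Ioi] at ht
      rw [Function.uncurry_apply_pair, Real.norm_of_nonneg]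
      have := cn y
      simp only [H]
      positivity
  have ht : ∀ y : En n, ∫ t in Ioi (0:ℝ), H y t
      = (1 - Real.cos (inner ℝ k y)) / ‖y‖ ^ ((n:ℝ) + 2 * s) := by
    intro y
    by_cases hy0 : y = 0
    · simp [H, hy0]
    have hyp : 0 < ‖y‖ := norm_pos_iff.2 hy0
    have : ∀ t, H y t = (G⁻¹ * (1 - Real.cos (inner ℝ k y))) *
        (t ^ ((n:ℝ) / 2 + s - 1) * Real.exp (-(‖y‖ ^ 2 * t))) := by
      intro t
      have : -(‖y‖ ^ 2 * t) = -t * ‖y‖ ^ 2 := by ring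
      simp only [H, this]; ring
    simp only [this]
    rw [integral_const_mul, Real.integral_rpow_mul_exp_neg_mul_Ioi ha (by positivity)]
    have e : (1 / ‖y‖ ^ 2) ^ ((n:ℝ) / 2 + s) = (‖y‖ ^ ((n:ℝ) + 2 * s))⁻¹ := by
      rw [one_div, Real.inv_rpow (by positivity), ← Real.rpow_natCast, ← Real.rpow_mul hyp.le]
      congr 2; push_cast; ring
    rw [e, ← hG]; field_simp
  constructor
  · exact Hint.integral_prod_left.congr (Eventually.of_forall ht)
  · calc _ = ∫ y : En n, ∫ t in Ioi (0:ℝ), H y t := by simp only [ht]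
      _ = ∫ t in Ioi (0:ℝ), ∫ y : En n, H y t := integral_integral_swap Hint
      _ = ∫ t in Ioi (0:ℝ), (G⁻¹ * Real.pi ^ ((n:ℝ) / 2)) *
          (t ^ (s - 1) * (1 - Real.exp (-(‖k‖ ^ 2 / 4 / t)))) :=
        setIntegral_congr_fun measurableSet_Ioi hy
      _ = _ := by
        rw [integral_const_mul, lv.2, Cns, (Cns_pos (n := n) hs0 hs1).2,
          Real.div_rpow (by positivity) (by norm_num), ← hG]
        have := Real.pi_pos
        have h1 : 0 < Real.Gamma (1 - s) := Real.Gamma_pos_of_pos (by linarith)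
        field_simp

/-- the truncated kernel `1_{|y|>ε} |y|^{-n-2s}` -/
def Nk (n : ℕ) (s ε : ℝ) (y : En n) : ℝ :=
  {y : En n | ε < ‖y‖}.indicator (fun y => (‖y‖ ^ ((n:ℝ) + 2 * s))⁻¹) y

lemma Nk_measurable (n : ℕ) (s ε : ℝ) : Measurable (Nk n s ε) := by
  unfold Nk
  refine Measurable.indicator (by fun_prop) (measurableSet_lt measurable_const measurable_norm)

lemma Nk_nonneg (n : ℕ) (s ε : ℝ) (y : En n) : 0 ≤ Nk n s ε y := by
  refine indicator_nonneg (fun y _ => by positivity) y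

lemma Nk_neg (n : ℕ) (s ε : ℝ) (y : En n) : Nk n s ε (-y) = Nk n s ε y := by
  simp [Nk, indicator_apply]

lemma Nk_integrable {n : ℕ} {s ε : ℝ} (hs : 0 < s) (hε : 0 < ε) : Integrable (Nk n s ε) := by
  have h := integrable_one_add_norm (E := En n) (μ := volume) (r := (n:ℝ) + 2 * s)
    (by simp; linarith)
  refine (h.const_mul ((1 + ε⁻¹) ^ ((n:ℝ) + 2 * s))).mono'
    (Nk_measurable n s ε).aestronglyMeasurable (Eventually.of_forall fun y => ?_)
  rw [Real.norm_of_nonneg (Nk_nonneg n s ε y), Nk, indicator_apply]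
  split_ifs with hy
  · rw [mem_setOf_eq] at hy
    have hyp : 0 < ‖y‖ := hε.trans hy
    have hr : 0 ≤ (n:ℝ) + 2 * s := by positivity
    rw [Real.rpow_neg (by positivity), ← div_eq_mul_inv, ← Real.div_rpow (by positivity) (by positivity),
      ← Real.inv_rpow hyp.le]
    refine Real.rpow_le_rpow (by positivity) ?_ hr
    rw [inv_le_comm₀ hyp (by positivity), inv_div, div_le_iff₀ (by positivity)]
    have : 1 ≤ ‖y‖ * ε⁻¹ := by
      rw [← div_eq_mul_inv, one_le_div hε]; exact hy.le
    linarith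
  · positivity

lemma ek_add_conj {n : ℕ} (k y : En n) :
    ek k y + ek (-k) y = ((2 * Real.cos (inner ℝ k y) : ℝ) : ℂ) := by
  rw [ek, ek, inner_neg_left]
  push_cast
  rw [Complex.two_cos]

/-- truncated symbol -/
def Ie (n : ℕ) (s ε : ℝ) (k : En n) : ℝ := ∫ y : En n, Nk n s ε y * (1 - Real.cos (inner ℝ k y))

lemma Ie_complex {n : ℕ} {s ε : ℝ} (hs : 0 < s) (hε : 0 < ε) (k : En n) :
    ∫ y : En n, (Nk n s ε y : ℂ) * (1 - ek (-k) y) = (Ie n s ε k : ℂ) := by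
  have Ni := Nk_integrable (n := n) hs hε
  have gi : ∀ k : En n, Integrable fun y : En n => (Nk n s ε y : ℂ) * (1 - ek k y) := by
    intro k
    refine (Ni.const_mul 2).mono' ?_ (Eventually.of_forall fun y => ?_)
    · exact ((Complex.measurable_ofReal.comp (Nk_measurable n s ε)).mul
        (measurable_const.sub (ek_continuous_right k).measurable)).aestronglyMeasurable
    · rw [norm_mul, Complex.norm_real, Real.norm_of_nonneg (Nk_nonneg n s ε y), mul_comm]
      have h1 : ‖1 - ek k y‖ ≤ 2 := by
        refine (norm_sub_le _ _).trans ?_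
        rw [norm_ek]; norm_num
      have := Nk_nonneg n s ε y
      gcongr
  have e1 : ∫ y : En n, (Nk n s ε y : ℂ) * (1 - ek (-k) y)
      = ∫ y : En n, (Nk n s ε y : ℂ) * (1 - ek k y) := by
    rw [← integral_neg_eq_self]
    congr 1; ext y
    rw [Nk_neg, ek_neg, neg_neg]
  have e2 : (∫ y : En n, (Nk n s ε y : ℂ) * (1 - ek (-k) y))
      + ∫ y : En n, (Nk n s ε y : ℂ) * (1 - ek k y) = 2 * (Ie n s ε k : ℂ) := by
    rw [← integral_add (gi _) (gi _), Ie, ← integral_complex_ofReal, ← integral_const_mul]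
    congr 1; ext y
    have := ek_add_conj k y
    push_cast at this ⊢
    linear_combination (-(Nk n s ε y : ℂ)) * this
  rw [← e1] at e2
  linear_combination e2 / 2

lemma Ie_bound_fun {n : ℕ} {s ε : ℝ} (k y : En n) :
    ‖Nk n s ε y * (1 - Real.cos (inner ℝ k y))‖
      ≤ (1 - Real.cos (inner ℝ k y)) / ‖y‖ ^ ((n:ℝ) + 2 * s) := by
  have h1 : 0 ≤ 1 - Real.cos (inner ℝ k y) := sub_nonneg.2 (Real.cos_le_one _)
  rw [Real.norm_of_nonneg (mul_nonneg (Nk_nonneg n s ε y) h1), div_eq_inv_mul]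
  refine mul_le_mul_of_nonneg_right ?_ h1
  exact indicator_le_self' (fun _ _ => by positivity) y

lemma Ie_meas (n : ℕ) (s ε : ℝ) : Measurable (Ie n s ε) := by
  unfold Ie
  have : StronglyMeasurable (fun q : En n × En n =>
      Nk n s ε q.2 * (1 - Real.cos (inner ℝ q.1 q.2))) := by
    apply Measurable.stronglyMeasurable
    have := Nk_measurable n s ε
    fun_prop
  exact (this.integral_prod_right (ν := volume)).measurable

lemma Ie_aesm {n : ℕ} {s ε : ℝ} (k : En n) :
    AEStronglyMeasurable (fun y : En n => Nk n s ε y * (1 - Real.cos (inner ℝ k y))) := by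
  have := Nk_measurable n s ε
  exact Measurable.aestronglyMeasurable (by fun_prop)

lemma Ie_bound {n : ℕ} {s ε : ℝ} (hs0 : 0 < s) (hs1 : s < 1) (k : En n) :
    ‖Ie n s ε k‖ ≤ (Cns n s)⁻¹ * (‖k‖ ^ 2) ^ s := by
  rw [← (levy_khintchine hs0 hs1 k).2, Ie]
  exact norm_integral_le_of_norm_le (levy_khintchine hs0 hs1 k).1
    (Eventually.of_forall fun y => Ie_bound_fun k y)

lemma Ie_tendsto {n : ℕ} {s : ℝ} (hs0 : 0 < s) (hs1 : s < 1) (k : En n) :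
    Tendsto (fun ε => Ie n s ε k) (𝓝[>] 0) (𝓝 ((Cns n s)⁻¹ * (‖k‖ ^ 2) ^ s)) := by
  rw [← (levy_khintchine hs0 hs1 k).2]
  unfold Ie
  refine tendsto_integral_filter_of_dominated_convergence _
    (Eventually.of_forall fun ε => Ie_aesm k)
    (Eventually.of_forall fun ε => Eventually.of_forall fun y => Ie_bound_fun k y)
    (levy_khintchine hs0 hs1 k).1 (Eventually.of_forall fun y => ?_)
  by_cases hy : y = 0
  · simp [hy]
  have hyp : 0 < ‖y‖ := norm_pos_iff.2 hy
  refine tendsto_const_nhds.congr' ?_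
  filter_upwards [nhdsWithin_le_nhds (Iio_mem_nhds hyp)] with ε hε
  rw [mem_Iio] at hε
  rw [Nk, indicator_of_mem (by exact hε), div_eq_inv_mul]

lemma fracLap_rep {n : ℕ} {s : ℝ} (hs0 : 0 < s) (hs1 : s < 1) {Ω : Type*} [MeasurableSpace Ω]
    {μ : Measure Ω} [SFinite μ] {c : Ω → ℂ} {k : Ω → En n} (hc : Integrable c μ)
    (hk : Measurable k) (hck : Integrable (fun ω => ‖c ω‖ * (‖k ω‖ ^ 2) ^ s) μ)
    {w : En n → ℝ} (hw : ∀ y, (w y : ℂ) = ∫ ω, c ω * ek (k ω) y ∂μ) (x : En n) :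
    (fracLap n s w x : ℂ) = ∫ ω, c ω * (((‖k ω‖ ^ 2) ^ s : ℝ) : ℂ) * ek (k ω) x ∂μ := by
  set S : ℝ → ℝ := fun ε => ∫ y in {y : En n | ε < ‖x - y‖},
    (w x - w y) / ‖x - y‖ ^ ((n : ℝ) + 2 * s) with hS
  have ekm : ∀ y, AEStronglyMeasurable (fun ω => ek (k ω) y) μ := fun y =>
    (ek_continuous.measurable.comp (f := fun ω : Ω => (k ω, y)) (by fun_prop)).aestronglyMeasurable
  have hci : ∀ y, Integrable (fun ω => c ω * ek (k ω) y) μ := fun y =>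
    hc.norm.mono' (hc.aestronglyMeasurable.mul (ekm y))
      (Eventually.of_forall fun ω => by simp [norm_ek])
  have hSeq : ∀ ε, 0 < ε → (S ε : ℂ) = ∫ ω, c ω * ek (k ω) x * (Ie n s ε (k ω) : ℂ) ∂μ := by
    intro ε hε
    have e0 : S ε = ∫ y, Nk n s ε y * (w x - w (x - y)) := by
      have hms : MeasurableSet {y : En n | ε < ‖x - y‖} :=
        measurableSet_lt measurable_const (by fun_prop)
      rw [hS]
      simp only
      rw [← integral_indicator hms, ← integral_sub_left_eq_self _ volume x]
      congr 1; ext y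
      simp only [indicator_apply, Nk, mem_setOf_eq, sub_sub_cancel]
      split_ifs
      · rw [div_eq_inv_mul]
      · simp
    have Cint : Integrable (Function.uncurry fun (y : En n) (ω : Ω) =>
        (Nk n s ε y : ℂ) * (c ω * ek (k ω) x * (1 - ek (-k ω) y))) (volume.prod μ) := by
      have h1 : Integrable (fun p : En n × Ω => (Nk n s ε p.1 : ℂ) * c p.2) (volume.prod μ) :=
        (Nk_integrable hs0 hε).ofReal.mul_prod hc
      refine (h1.norm.const_mul 2).mono' ?_ (Eventually.of_forall fun p => ?_)
      · have h2 : Measurable fun p : En n × Ω => ek (k p.2) x * (1 - ek (-k p.2) p.1) := by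
          refine Measurable.mul ?_ (measurable_const.sub ?_)
          · exact ek_continuous.measurable.comp (f := fun p : En n × Ω => (k p.2, x)) (by fun_prop)
          · exact ek_continuous.measurable.comp (f := fun p : En n × Ω => (-k p.2, p.1))
              (by fun_prop)
        refine (h1.aestronglyMeasurable.mul h2.aestronglyMeasurable).congr
          (Eventually.of_forall fun p => ?_)
        simp only [Function.uncurry_def, Pi.mul_apply]; ring
      · have h3 : ‖1 - ek (-k p.2) p.1‖ ≤ 2 := by
          refine (norm_sub_le _ _).trans ?_
          rw [norm_ek]; norm_num
        simp only [Function.uncurry_def, norm_mul, norm_ek, mul_one]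
        calc _ = ‖(Nk n s ε p.1 : ℂ)‖ * ‖c p.2‖ * ‖1 - ek (-k p.2) p.1‖ := by ring
          _ ≤ ‖(Nk n s ε p.1 : ℂ)‖ * ‖c p.2‖ * 2 := by gcongr
          _ = _ := by ring
    rw [e0, ← integral_complex_ofReal]
    calc ∫ y, ((Nk n s ε y * (w x - w (x - y)) : ℝ) : ℂ)
        = ∫ y, ∫ ω, (Nk n s ε y : ℂ) * (c ω * ek (k ω) x * (1 - ek (-k ω) y)) ∂μ := by
          congr 1; ext y
          rw [Complex.ofReal_mul, Complex.ofReal_sub, hw, hw, integral_const_mul,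
            ← integral_sub (hci x) (hci (x - y))]
          congr 2; ext ω
          rw [sub_eq_add_neg x, ek_add, ek_neg]; ring
      _ = ∫ ω, (∫ y, (Nk n s ε y : ℂ) * (c ω * ek (k ω) x * (1 - ek (-k ω) y))) ∂μ :=
          integral_integral_swap Cint
      _ = _ := by
          congr 1; ext ω
          rw [← Ie_complex hs0 hε, ← integral_const_mul]
          congr 1; ext y; ring
  set T : ℂ := ∫ ω, c ω * ek (k ω) x * (((Cns n s)⁻¹ * (‖k ω‖ ^ 2) ^ s : ℝ) : ℂ) ∂μ with hT
  have hlim : Tendsto (fun ε => (S ε : ℂ)) (𝓝[>] 0) (𝓝 T) := by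
    have h1 : Tendsto (fun ε => ∫ ω, c ω * ek (k ω) x * (Ie n s ε (k ω) : ℂ) ∂μ) (𝓝[>] 0) (𝓝 T) := by
      refine tendsto_integral_filter_of_dominated_convergence
        (fun ω => (Cns n s)⁻¹ * (‖c ω‖ * (‖k ω‖ ^ 2) ^ s))
        (Eventually.of_forall fun ε => ?_) (Eventually.of_forall fun ε =>
          Eventually.of_forall fun ω => ?_) (hck.const_mul _) (Eventually.of_forall fun ω => ?_)
      · exact (hci x).aestronglyMeasurable.mul
          (Complex.measurable_ofReal.comp ((Ie_meas n s ε).comp hk)).aestronglyMeasurable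
      · rw [norm_mul, norm_mul, norm_ek, Complex.norm_real, mul_one]
        calc ‖c ω‖ * ‖Ie n s ε (k ω)‖ ≤ ‖c ω‖ * ((Cns n s)⁻¹ * (‖k ω‖ ^ 2) ^ s) := by
              gcongr; exact Ie_bound hs0 hs1 (k ω)
          _ = _ := by ring
      · exact ((Complex.continuous_ofReal.tendsto _).comp (Ie_tendsto hs0 hs1 (k ω))).const_mul _
    refine h1.congr' ?_
    filter_upwards [self_mem_nhdsWithin] with ε hε using (hSeq ε hε).symm
  have hre : Tendsto S (𝓝[>] 0) (𝓝 T.re) := by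
    simpa [Function.comp_def] using (Complex.continuous_re.tendsto T).comp hlim
  have hTre : (T.re : ℂ) = T :=
    tendsto_nhds_unique ((Complex.continuous_ofReal.tendsto _).comp hre) hlim
  rw [fracLap, hre.limUnder_eq, Complex.ofReal_mul, hTre, hT, ← integral_const_mul]
  congr 1; ext ω
  have : (Cns n s : ℂ) ≠ 0 := by exact_mod_cast (Cns_pos (n := n) hs0 hs1).1.ne'
  push_cast
  field_simp

/-- The frequency `2πξ`. -/
def kk {n : ℕ} (ξ : En n) : En n := (2 * Real.pi) • ξ

lemma kk_continuous {n : ℕ} : Continuous (kk (n := n)) := by unfold kk; fun_prop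

open scoped FourierTransform in
lemma fourier_repr {n : ℕ} {u : En n → ℝ} (hu : ContDiff ℝ (⊤ : ℕ∞) u)
    (huc : HasCompactSupport u) :
    ∃ c : En n → ℂ, Continuous c ∧ (∀ j : ℕ, Integrable (fun ξ => ‖c ξ‖ * ‖kk ξ‖ ^ j)) ∧
      ∀ y, (u y : ℂ) = ∫ ξ, c ξ * ek (kk ξ) y := by
  have h1 : HasCompactSupport (fun y => (u y : ℂ)) :=
    huc.comp_left (g := fun r : ℝ => (r : ℂ)) Complex.ofReal_zero
  have h2 : ContDiff ℝ (⊤ : ℕ∞) (fun y => (u y : ℂ)) := Complex.ofRealCLM.contDiff.comp hu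
  let f : SchwartzMap (En n) ℂ := h1.toSchwartzMap h2
  refine ⟨⇑(𝓕 f : SchwartzMap (En n) ℂ), (𝓕 f : SchwartzMap (En n) ℂ).continuous, fun j => ?_, fun y => ?_⟩
  · have h := ((𝓕 f : SchwartzMap (En n) ℂ).integrable_pow_mul volume j).const_mul
      ((2 * Real.pi) ^ j)
    refine h.congr (Eventually.of_forall fun ξ => ?_)
    simp only [kk, norm_smul, mul_pow, Real.norm_eq_abs, abs_of_pos Real.two_pi_pos]
    ring
  · have hinv : 𝓕⁻ (𝓕 f) = f := by simp
    have e1 : (u y : ℂ) = (𝓕⁻ (𝓕 f) : SchwartzMap (En n) ℂ) y := by rw [hinv]; rfl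
    rw [e1, SchwartzMap.fourierInv_coe, Real.fourierInv_eq']
    refine integral_congr_ae (Eventually.of_forall fun ξ => ?_)
    simp only [smul_eq_mul, ek, kk, inner_smul_left]
    rw [mul_comm]
    congr 2

/-- Representation data used below. -/
def FRep {n : ℕ} (u : En n → ℝ) (c : En n → ℂ) : Prop :=
  Continuous c ∧ (∀ j : ℕ, Integrable (fun ξ => ‖c ξ‖ * ‖kk ξ‖ ^ j)) ∧
      ∀ y, (u y : ℂ) = ∫ ξ, c ξ * ek (kk ξ) y

lemma FRep.int {n : ℕ} {u : En n → ℝ} {c : En n → ℂ} (h : FRep u c) : Integrable c := by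
  have := h.2.1 0
  simp only [pow_zero, mul_one] at this
  exact (integrable_norm_iff h.1.aestronglyMeasurable).1 this

lemma rpow_bd {s a : ℝ} (hs0 : 0 < s) (hs1 : s < 1) (ha : 0 ≤ a) : a ^ s ≤ 1 + a := by
  rcases le_total a 1 with h | h
  · have := Real.rpow_le_one ha h hs0.le
    linarith
  · have := Real.rpow_le_rpow_of_exponent_le h hs1.le
    rw [Real.rpow_one] at this; linarith

lemma FRep.ints {n : ℕ} {s : ℝ} (hs0 : 0 < s) (hs1 : s < 1) {u : En n → ℝ} {c : En n → ℂ}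
    (h : FRep u c) : Integrable (fun ξ => ‖c ξ‖ * (‖kk ξ‖ ^ 2) ^ s) := by
  have hc := h.1
  have hk := kk_continuous (n := n)
  refine ((h.2.1 0).add (h.2.1 2)).mono' ?_ (Eventually.of_forall fun ξ => ?_)
  · exact (Continuous.mul (by fun_prop) (Continuous.rpow_const (by fun_prop)
      (fun _ => Or.inr hs0.le))).aestronglyMeasurable
  · rw [Real.norm_of_nonneg (by positivity)]
    have := mul_le_mul_of_nonneg_left (rpow_bd hs0 hs1 (sq_nonneg ‖kk ξ‖)) (norm_nonneg (c ξ))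
    simp only [Pi.add_apply]
    linarith

lemma CSext_rep {n : ℕ} {s z : ℝ} (hs0 : 0 < s) (hz : 0 < z)
    {u : En n → ℝ} {c : En n → ℂ} (h : FRep u c) (y : En n) :
    (CSext n s u y z : ℂ) = ∫ ξ, c ξ * (psi s (‖kk ξ‖ ^ 2) z : ℂ) * ek (kk ξ) y :=
  Pconv_rep hs0 hz h.int kk_continuous.measurable h.2.2 y

lemma psi_meas_kk {n : ℕ} (s z : ℝ) : Measurable (fun ξ : En n => psi s (‖kk ξ‖ ^ 2) z) := by
  have hk := kk_continuous (n := n)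
  exact (psi_measurable s).comp (f := fun ξ : En n => (‖kk ξ‖ ^ 2, z)) (by fun_prop)

lemma psiD_meas_kk {n : ℕ} (s z : ℝ) : Measurable (fun ξ : En n => psiD s (‖kk ξ‖ ^ 2) z) := by
  have hk := kk_continuous (n := n)
  exact (psiD_measurable s).comp (f := fun ξ : En n => (‖kk ξ‖ ^ 2, z)) (by fun_prop)

lemma ek_hasFDeriv {n : ℕ} (k y : En n) :
    HasFDerivAt (ek k) ((ek k y * Complex.I) • (Complex.ofRealCLM.comp (innerSL ℝ k))) y := by
  have h1 : HasFDerivAt (fun y : En n => ((inner ℝ k y : ℝ) : ℂ))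
      (Complex.ofRealCLM.comp (innerSL ℝ k)) y :=
    Complex.ofRealCLM.hasFDerivAt.comp y ((innerSL ℝ k).hasFDerivAt)
  have h2 := (h1.mul_const Complex.I).cexp
  refine h2.congr_fderiv ?_
  ext w
  simp [ek]
  ring

lemma norm_ekD {n : ℕ} (k y : En n) :
    ‖(ek k y * Complex.I) • (Complex.ofRealCLM.comp (innerSL ℝ k))‖ ≤ ‖k‖ := by
  refine ContinuousLinearMap.opNorm_le_bound _ (norm_nonneg _) fun w => ?_
  simp only [ContinuousLinearMap.smul_apply, norm_smul, norm_mul, norm_ek, Complex.norm_I, one_mul,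
    ContinuousLinearMap.comp_apply, Complex.ofRealCLM_apply, innerSL_apply_apply, Complex.norm_real]
  exact norm_inner_le_norm k w

lemma pd_rep {n : ℕ} {s z : ℝ} (hs0 : 0 < s) (hz : 0 < z)
    {u : En n → ℝ} {c : En n → ℂ} (h : FRep u c) (i : Fin n) (y : En n) :
    (pd i (fun y' => CSext n s u y' z) y : ℂ) =
      ∫ ξ, c ξ * ((psi s (‖kk ξ‖ ^ 2) z : ℝ) : ℂ) * (Complex.I * ((kk ξ i : ℝ) : ℂ)) * ek (kk ξ) y := by
  have hc := h.1
  have hk := kk_continuous (n := n)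
  have hpm := psi_meas_kk (n := n) s z
  have hekm : ∀ y : En n, Continuous (fun ξ => ek (kk ξ) y) := fun y =>
    ek_continuous.comp (f := fun ξ : En n => (kk ξ, y)) (by fun_prop)
  have hpb : ∀ ξ : En n, ‖((psi s (‖kk ξ‖ ^ 2) z : ℝ) : ℂ)‖ ≤ 1 := fun ξ => by
    rw [Complex.norm_real, Real.norm_of_nonneg (psi_nonneg hs0 _ _)]
    exact psi_le_one hs0 (sq_nonneg _) _
  have hm : ∀ y : En n, AEStronglyMeasurable
      (fun ξ => c ξ * ((psi s (‖kk ξ‖ ^ 2) z : ℝ) : ℂ) * ek (kk ξ) y) volume := fun y =>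
    ((hc.measurable.mul (Complex.measurable_ofReal.comp hpm)).mul
      (hekm y).measurable).aestronglyMeasurable
  let F' : En n → En n → (En n →L[ℝ] ℂ) := fun y ξ =>
    (c ξ * ((psi s (‖kk ξ‖ ^ 2) z : ℝ) : ℂ)) •
      ((ek (kk ξ) y * Complex.I) • (Complex.ofRealCLM.comp (innerSL ℝ (kk ξ))))
  have hF'm : ∀ y, AEStronglyMeasurable (F' y) volume := fun y => by
    have e1 : AEStronglyMeasurable (fun ξ => c ξ * ((psi s (‖kk ξ‖ ^ 2) z : ℝ) : ℂ)) volume :=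
      (hc.measurable.mul (Complex.measurable_ofReal.comp hpm)).aestronglyMeasurable
    have e2 : Continuous (fun ξ : En n => (ek (kk ξ) y * Complex.I) •
        (Complex.ofRealCLM.comp (innerSL ℝ (kk ξ)))) := by
      have := hekm y
      have e3 : Continuous (fun ξ : En n => innerSL ℝ (kk ξ)) := (innerSL ℝ).continuous.comp hk
      refine Continuous.smul (this.mul continuous_const) ?_
      exact continuous_const.clm_comp e3
    exact e1.smul e2.aestronglyMeasurable
  have hF'b : ∀ y ξ, ‖F' y ξ‖ ≤ ‖c ξ‖ * ‖kk ξ‖ ^ 1 := fun y ξ => by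
    simp only [F']
    rw [norm_smul, norm_mul, pow_one]
    have := norm_ekD (kk ξ) y
    have h2 : ‖c ξ‖ * ‖((psi s (‖kk ξ‖ ^ 2) z : ℝ) : ℂ)‖ ≤ ‖c ξ‖ :=
      mul_le_of_le_one_right (norm_nonneg _) (hpb ξ)
    gcongr
  have key := hasFDerivAt_integral_of_dominated_of_fderiv_le (𝕜 := ℝ) (μ := volume)
    (F := fun y ξ => c ξ * ((psi s (‖kk ξ‖ ^ 2) z : ℝ) : ℂ) * ek (kk ξ) y) (F' := F') (x₀ := y)
    (bound := fun ξ => ‖c ξ‖ * ‖kk ξ‖ ^ 1) (s := Set.univ) univ_mem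
    (Eventually.of_forall hm)
    ((h.int.norm).mono' (hm y) (Eventually.of_forall fun ξ => by
      rw [norm_mul, norm_mul, norm_ek, mul_one]
      exact mul_le_of_le_one_right (norm_nonneg _) (hpb ξ)))
    (hF'm y) (Eventually.of_forall fun ξ y _ => hF'b y ξ) (h.2.1 1)
    (Eventually.of_forall fun ξ y _ => (ek_hasFDeriv (kk ξ) y).const_mul _)
  have hF'i : Integrable (F' y) volume :=
    (h.2.1 1).mono' (hF'm y) (Eventually.of_forall fun ξ => hF'b y ξ)
  have k2 : HasFDerivAt (fun y' => CSext n s u y' z)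
      (Complex.reCLM.comp (∫ ξ, F' y ξ)) y := by
    have := Complex.reCLM.hasFDerivAt.comp y key
    refine this.congr_of_eventuallyEq (Eventually.of_forall fun y' => ?_)
    simp only [Function.comp_apply, Complex.reCLM_apply]
    rw [← CSext_rep hs0 hz h y', Complex.ofReal_re]
  have k3 : HasFDerivAt (fun y' => (CSext n s u y' z : ℂ)) (∫ ξ, F' y ξ) y := by
    refine key.congr_of_eventuallyEq (Eventually.of_forall fun y' => ?_)
    exact CSext_rep hs0 hz h y'
  have k4 := (Complex.ofRealCLM.hasFDerivAt.comp y k2).unique k3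
  have k5 := congrArg (fun L => L (EuclideanSpace.single i (1:ℝ))) k4
  unfold pd
  rw [k2.fderiv]
  refine Eq.trans k5 ?_
  simp only []
  rw [ContinuousLinearMap.integral_apply hF'i]
  refine integral_congr_ae (Eventually.of_forall fun ξ => ?_)
  simp only [F', ContinuousLinearMap.smul_apply, ContinuousLinearMap.comp_apply,
    Complex.ofRealCLM_apply, innerSL_apply_apply, smul_eq_mul,
    EuclideanSpace.inner_single_right]
  simp
  ring

lemma psiD_bound {s κ z w : ℝ} (hs0 : 0 < s) (hs1 : s < 1) (hκ : 0 ≤ κ) (hz : 0 < z)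
    (hw : w ∈ Ioo (z / 2) (2 * z)) :
    |psiD s κ w| ≤ (betaS s)⁻¹ * ((z / 2) ^ (2 * s - 1) + (2 * z) ^ (2 * s - 1)) * κ ^ s := by
  have hw0 : 0 < w := by have := hw.1; linarith
  have hb := betaS_pos hs0 hs1
  have h1 : w ^ (2 * s - 1) ≤ (z / 2) ^ (2 * s - 1) + (2 * z) ^ (2 * s - 1) := by
    rcases le_total 0 (2 * s - 1) with h | h
    · have := Real.rpow_le_rpow hw0.le hw.2.le h
      have : 0 ≤ (z / 2) ^ (2 * s - 1) := by positivity
      linarith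
    · have := Real.rpow_le_rpow_of_nonpos (by linarith : 0 < z / 2) hw.1.le h
      have : 0 ≤ (2 * z) ^ (2 * s - 1) := by positivity
      linarith
  have h2 := psi_nonneg (s := 1 - s) (by linarith) κ w
  have h3 := psi_le_one (s := 1 - s) (by linarith) hκ w
  unfold psiD
  rw [abs_neg, abs_of_nonneg (by positivity)]
  calc (betaS s)⁻¹ * κ ^ s * w ^ (2 * s - 1) * psi (1 - s) κ w
      ≤ (betaS s)⁻¹ * κ ^ s * w ^ (2 * s - 1) * 1 := by gcongr
    _ ≤ (betaS s)⁻¹ * κ ^ s * ((z / 2) ^ (2 * s - 1) + (2 * z) ^ (2 * s - 1)) * 1 := by gcongr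
    _ = _ := by ring

lemma zd_rep {n : ℕ} {s z : ℝ} (hs0 : 0 < s) (hs1 : s < 1) (hz : 0 < z)
    {u : En n → ℝ} {c : En n → ℂ} (h : FRep u c) (y : En n) :
    ((deriv (CSext n s u y) z : ℝ) : ℂ) =
      ∫ ξ, c ξ * ((psiD s (‖kk ξ‖ ^ 2) z : ℝ) : ℂ) * ek (kk ξ) y := by
  have hc := h.1
  have hk := kk_continuous (n := n)
  have hekm : Continuous (fun ξ => ek (kk ξ) y) :=
    ek_continuous.comp (f := fun ξ : En n => (kk ξ, y)) (by fun_prop)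
  have hpb : ∀ ξ : En n, ‖((psi s (‖kk ξ‖ ^ 2) z : ℝ) : ℂ)‖ ≤ 1 := fun ξ => by
    rw [Complex.norm_real, Real.norm_of_nonneg (psi_nonneg hs0 _ _)]
    exact psi_le_one hs0 (sq_nonneg _) _
  have hm : ∀ z : ℝ, AEStronglyMeasurable
      (fun ξ => c ξ * ((psi s (‖kk ξ‖ ^ 2) z : ℝ) : ℂ) * ek (kk ξ) y) volume := fun z =>
    ((hc.measurable.mul (Complex.measurable_ofReal.comp (psi_meas_kk (n := n) s z))).mul
      hekm.measurable).aestronglyMeasurable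
  have hmD : ∀ z : ℝ, AEStronglyMeasurable
      (fun ξ => c ξ * ((psiD s (‖kk ξ‖ ^ 2) z : ℝ) : ℂ) * ek (kk ξ) y) volume := fun z =>
    ((hc.measurable.mul (Complex.measurable_ofReal.comp (psiD_meas_kk (n := n) s z))).mul
      hekm.measurable).aestronglyMeasurable
  have key := (hasDerivAt_integral_of_dominated_loc_of_deriv_le (𝕜 := ℝ) (μ := volume)
    (F := fun z ξ => c ξ * ((psi s (‖kk ξ‖ ^ 2) z : ℝ) : ℂ) * ek (kk ξ) y)
    (F' := fun z ξ => c ξ * ((psiD s (‖kk ξ‖ ^ 2) z : ℝ) : ℂ) * ek (kk ξ) y) (x₀ := z)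
    (bound := fun ξ => (betaS s)⁻¹ * ((z / 2) ^ (2 * s - 1) + (2 * z) ^ (2 * s - 1)) *
      (‖c ξ‖ * (‖kk ξ‖ ^ 2) ^ s)) (s := Ioo (z / 2) (2 * z))
    (Ioo_mem_nhds (by linarith) (by linarith))
    (Eventually.of_forall hm)
    ((h.int.norm).mono' (hm z) (Eventually.of_forall fun ξ => by
      rw [norm_mul, norm_mul, norm_ek, mul_one]
      exact mul_le_of_le_one_right (norm_nonneg _) (hpb ξ)))
    (hmD z) (Eventually.of_forall fun ξ w hw => by
      have := psiD_bound hs0 hs1 (sq_nonneg ‖kk ξ‖) hz hw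
      rw [norm_mul, norm_mul, norm_ek, mul_one, Complex.norm_real, Real.norm_eq_abs]
      have := mul_le_mul_of_nonneg_left this (norm_nonneg (c ξ))
      linarith)
    ((h.ints hs0 hs1).const_mul _)
    (Eventually.of_forall fun ξ w hw => by
      have hw0 : 0 < w := by have := hw.1; linarith
      have h1 := psi_deriv hs0 hs1 (sq_nonneg ‖kk ξ‖) hw0
      exact (h1.ofReal_comp.const_mul (c ξ)).mul_const _)).2
  have hev : (fun w => (CSext n s u y w : ℂ)) =ᶠ[𝓝 z]
      (fun w => ∫ ξ, c ξ * ((psi s (‖kk ξ‖ ^ 2) w : ℝ) : ℂ) * ek (kk ξ) y) := by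
    filter_upwards [Ioi_mem_nhds hz] with w hw
    exact CSext_rep hs0 hw h y
  have k3 := key.congr_of_eventuallyEq hev
  have k2 : HasDerivAt (CSext n s u y)
      (∫ ξ, c ξ * ((psiD s (‖kk ξ‖ ^ 2) z : ℝ) : ℂ) * ek (kk ξ) y).re z := by
    have := (Complex.reCLM.hasFDerivAt (x := (CSext n s u y z : ℂ))).comp_hasDerivAt z k3
    exact this
  have k4 := k2.ofReal_comp.unique k3
  rw [k2.deriv]
  exact k4

/-- Sum of the two frequencies. -/
def kp {n : ℕ} (p : En n × En n) : En n := kk p.1 + kk p.2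

lemma kp_continuous {n : ℕ} : Continuous (kp (n := n)) := by
  have := kk_continuous (n := n)
  unfold kp; fun_prop

lemma prod_rep {n : ℕ} (a b : En n → ℂ) (y : En n) :
    (∫ ξ, a ξ * ek (kk ξ) y) * (∫ ξ, b ξ * ek (kk ξ) y) =
      ∫ p : En n × En n, a p.1 * b p.2 * ek (kp p) y := by
  rw [← integral_prod_mul (μ := volume) (ν := volume)]
  refine integral_congr_ae (Eventually.of_forall fun p => ?_)
  simp only [kp, ek_add_left]
  ring

lemma kp_polar {n : ℕ} (p : En n × En n) :
    (‖kk p.1‖ ^ 2 + ‖kk p.2‖ ^ 2 - ‖kp p‖ ^ 2) / 2 = - inner ℝ (kk p.1) (kk p.2) := by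
  unfold kp
  rw [norm_add_sq_real]; ring

lemma kp_abs {n : ℕ} (p : En n × En n) :
    |‖kk p.1‖ ^ 2 + ‖kk p.2‖ ^ 2 - ‖kp p‖ ^ 2| ≤ ‖kk p.1‖ ^ 2 + ‖kk p.2‖ ^ 2 := by
  have h := kp_polar p
  have h2 := abs_real_inner_le_norm (kk p.1) (kk p.2)
  have h3 : ‖kk p.1‖ ^ 2 + ‖kk p.2‖ ^ 2 - ‖kp p‖ ^ 2 = - (2 * inner ℝ (kk p.1) (kk p.2)) := by
    linarith
  rw [h3, abs_neg, abs_mul, abs_two]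
  nlinarith [sq_nonneg (‖kk p.1‖ - ‖kk p.2‖)]

/-- Multiplier of the extended gradient product. -/
def Dc {n : ℕ} (s z : ℝ) (c₁ c₂ : En n → ℂ) (p : En n × En n) : ℂ :=
  c₁ p.1 * c₂ p.2 * (((‖kk p.1‖ ^ 2 + ‖kk p.2‖ ^ 2 - ‖kp p‖ ^ 2) / 2 *
    (psi s (‖kk p.1‖ ^ 2) z * psi s (‖kk p.2‖ ^ 2) z) +
      psiD s (‖kk p.1‖ ^ 2) z * psiD s (‖kk p.2‖ ^ 2) z : ℝ) : ℂ)

/-- Horizontal amplitude. -/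
def ai {n : ℕ} (s z : ℝ) (c : En n → ℂ) (i : Fin n) (ξ : En n) : ℂ :=
  c ξ * ((psi s (‖kk ξ‖ ^ 2) z : ℝ) : ℂ) * (Complex.I * ((kk ξ i : ℝ) : ℂ))

/-- Vertical amplitude. -/
def az {n : ℕ} (s z : ℝ) (c : En n → ℂ) (ξ : En n) : ℂ :=
  c ξ * ((psiD s (‖kk ξ‖ ^ 2) z : ℝ) : ℂ)

lemma ai_int {n : ℕ} {s z : ℝ} (hs0 : 0 < s)
    {u : En n → ℝ} {c : En n → ℂ} (h : FRep u c) (i : Fin n) : Integrable (ai s z c i) := by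
  have hk := kk_continuous (n := n)
  refine (h.2.1 1).mono' ?_ (Eventually.of_forall fun ξ => ?_)
  · refine Measurable.aestronglyMeasurable ?_
    have hki : Continuous (fun ξ : En n => kk ξ i) := by fun_prop
    exact (h.1.measurable.mul (Complex.measurable_ofReal.comp (psi_meas_kk s z))).mul
      (measurable_const.mul (Complex.measurable_ofReal.comp hki.measurable))
  · unfold ai
    simp only [norm_mul, Complex.norm_I, one_mul, Complex.norm_real, pow_one]
    rw [Real.norm_of_nonneg (psi_nonneg hs0 _ _)]
    have h1 := psi_le_one hs0 (sq_nonneg ‖kk ξ‖) z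
    have h2 : ‖kk ξ i‖ ≤ ‖kk ξ‖ := PiLp.norm_apply_le (kk ξ) i
    have h3 : ‖c ξ‖ * psi s (‖kk ξ‖ ^ 2) z ≤ ‖c ξ‖ := mul_le_of_le_one_right (norm_nonneg _) h1
    gcongr

lemma az_int {n : ℕ} {s z : ℝ} (hs0 : 0 < s) (hs1 : s < 1) (hz : 0 < z)
    {u : En n → ℝ} {c : En n → ℂ} (h : FRep u c) : Integrable (az s z c) := by
  have hk := kk_continuous (n := n)
  refine ((h.ints hs0 hs1).const_mul
    ((betaS s)⁻¹ * ((z / 2) ^ (2 * s - 1) + (2 * z) ^ (2 * s - 1)))).mono' ?_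
    (Eventually.of_forall fun ξ => ?_)
  · exact (h.1.measurable.mul (Complex.measurable_ofReal.comp
      (psiD_meas_kk s z))).aestronglyMeasurable
  · unfold az
    have := psiD_bound hs0 hs1 (sq_nonneg ‖kk ξ‖) hz (w := z) ⟨by linarith, by linarith⟩
    rw [norm_mul, Complex.norm_real, Real.norm_eq_abs]
    have := mul_le_mul_of_nonneg_left this (norm_nonneg (c ξ))
    linarith

lemma Dc_eq {n : ℕ} (s z : ℝ) (c₁ c₂ : En n → ℂ) (p : En n × En n) :
    Dc s z c₁ c₂ p = (∑ i, ai s z c₁ i p.1 * ai s z c₂ i p.2) + az s z c₁ p.1 * az s z c₂ p.2 := by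
  unfold Dc ai az
  rw [kp_polar]
  have h : inner ℝ (kk p.1) (kk p.2) = ∑ i, kk p.1 i * kk p.2 i := by
    simp [PiLp.inner_apply, mul_comm]
  rw [h]
  push_cast
  rw [mul_add]
  congr 1
  · rw [neg_mul, mul_neg, Finset.sum_mul, Finset.mul_sum, ← Finset.sum_neg_distrib]
    refine Finset.sum_congr rfl fun i _ => ?_
    linear_combination (-(c₁ p.1 * c₂ p.2 * (kk p.1 i : ℂ) * (kk p.2 i : ℂ) *
      (psi s (‖kk p.1‖ ^ 2) z : ℂ) * (psi s (‖kk p.2‖ ^ 2) z : ℂ))) * Complex.I_mul_I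
  · ring

lemma Dc_int {n : ℕ} {s z : ℝ} (hs0 : 0 < s) (hs1 : s < 1) (hz : 0 < z)
    {u v : En n → ℝ} {c₁ c₂ : En n → ℂ} (h₁ : FRep u c₁) (h₂ : FRep v c₂) :
    Integrable (Dc s z c₁ c₂) := by
  have e : Dc s z c₁ c₂ = fun p => (∑ i, ai s z c₁ i p.1 * ai s z c₂ i p.2) +
      az s z c₁ p.1 * az s z c₂ p.2 := funext (Dc_eq s z c₁ c₂)
  rw [e]
  refine Integrable.add (integrable_finset_sum _ fun i _ => ?_) ?_
  · exact (ai_int hs0 h₁ i).mul_prod (ai_int hs0 h₂ i)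
  · exact (az_int hs0 hs1 hz h₁).mul_prod (az_int hs0 hs1 hz h₂)

lemma int_mul_ek {n : ℕ} {f : En n × En n → ℂ} (hf : Integrable f) (y : En n) :
    Integrable (fun p => f p * ek (kp p) y) := by
  refine hf.norm.mono' (hf.1.mul ?_) (Eventually.of_forall fun p => ?_)
  · have hk := kp_continuous (n := n)
    exact (ek_continuous.comp (f := fun p : En n × En n => (kp p, y))
      (by fun_prop)).aestronglyMeasurable
  · rw [norm_mul, norm_ek, mul_one]

lemma grad_rep {n : ℕ} {s z : ℝ} (hs0 : 0 < s) (hs1 : s < 1) (hz : 0 < z)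
    {u v : En n → ℝ} {c₁ c₂ : En n → ℂ} (h₁ : FRep u c₁) (h₂ : FRep v c₂) (y : En n) :
    (((∑ i, pd i (fun y' => CSext n s u y' z) y * pd i (fun y' => CSext n s v y' z) y)
      + deriv (CSext n s u y) z * deriv (CSext n s v y) z : ℝ) : ℂ) =
      ∫ p, Dc s z c₁ c₂ p * ek (kp p) y := by
  have hi : ∀ i, Integrable (fun p : En n × En n =>
      ai s z c₁ i p.1 * ai s z c₂ i p.2 * ek (kp p) y) := fun i =>
    int_mul_ek ((ai_int hs0 h₁ i).mul_prod (ai_int hs0 h₂ i)) y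
  have hz' : Integrable (fun p : En n × En n =>
      az s z c₁ p.1 * az s z c₂ p.2 * ek (kp p) y) :=
    int_mul_ek ((az_int hs0 hs1 hz h₁).mul_prod (az_int hs0 hs1 hz h₂)) y
  have e : (fun p => Dc s z c₁ c₂ p * ek (kp p) y) = fun p =>
      (∑ i, ai s z c₁ i p.1 * ai s z c₂ i p.2 * ek (kp p) y) +
      az s z c₁ p.1 * az s z c₂ p.2 * ek (kp p) y := by
    funext p
    rw [Dc_eq, add_mul, Finset.sum_mul]
  rw [e, integral_add (integrable_finset_sum _ fun i _ => hi i) hz',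
    integral_finset_sum _ fun i _ => hi i]
  push_cast
  congr 1
  · refine Finset.sum_congr rfl fun i _ => ?_
    rw [pd_rep hs0 hz h₁, pd_rep hs0 hz h₂]
    exact prod_rep (ai s z c₁ i) (ai s z c₂ i) y
  · rw [zd_rep hs0 hs1 hz h₁, zd_rep hs0 hs1 hz h₂]
    exact prod_rep (az s z c₁) (az s z c₂) y

/-- The full space-frequency integrand. -/
def GG {n : ℕ} (s : ℝ) (c₁ c₂ : En n → ℂ) (x : En n) (p : En n × En n) (z : ℝ) : ℂ :=
  c₁ p.1 * c₂ p.2 * ek (kp p) x * ((mker s (‖kk p.1‖ ^ 2) (‖kk p.2‖ ^ 2) (‖kp p‖ ^ 2) z : ℝ) : ℂ)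

lemma slice_rep {n : ℕ} {s z : ℝ} (hs0 : 0 < s) (hs1 : s < 1) (hz : 0 < z)
    {u v : En n → ℝ} {c₁ c₂ : En n → ℂ} (h₁ : FRep u c₁) (h₂ : FRep v c₂) (x : En n) :
    ((Pconv n s z
        (fun y =>
          (∑ i, pd i (fun y' => CSext n s u y' z) y * pd i (fun y' => CSext n s v y' z) y)
            + deriv (CSext n s u y) z * deriv (CSext n s v y) z) x
        * z ^ (1 - 2 * s) : ℝ) : ℂ) = ∫ p, GG s c₁ c₂ x p z := by
  push_cast
  rw [Pconv_rep hs0 hz (Dc_int hs0 hs1 hz h₁ h₂) kp_continuous.measurable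
    (grad_rep hs0 hs1 hz h₁ h₂) x, ← integral_mul_const]
  refine integral_congr_ae (Eventually.of_forall fun p => ?_)
  simp only [GG, Dc, mker]
  push_cast
  ring

lemma c12_ints {n : ℕ} {s : ℝ} (hs0 : 0 < s) (hs1 : s < 1)
    {u v : En n → ℝ} {c₁ c₂ : En n → ℂ} (h₁ : FRep u c₁) (h₂ : FRep v c₂) :
    Integrable (fun p : En n × En n => ‖c₁ p.1‖ * ‖c₂ p.2‖ *
      ((‖kk p.1‖ ^ 2) ^ s + (‖kk p.2‖ ^ 2) ^ s)) := by
  have e1 := (h₁.ints hs0 hs1).mul_prod h₂.int.norm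
  have e2 := (h₁.int.norm).mul_prod (h₂.ints hs0 hs1)
  refine (e1.add e2).congr (Eventually.of_forall fun p => ?_)
  simp only [Pi.add_apply]
  ring

lemma GG_int {n : ℕ} {s : ℝ} (hs0 : 0 < s) (hs1 : s < 1)
    {u v : En n → ℝ} {c₁ c₂ : En n → ℂ} (h₁ : FRep u c₁) (h₂ : FRep v c₂) (x : En n) :
    Integrable (Function.uncurry (GG s c₁ c₂ x))
      ((volume : Measure (En n × En n)).prod (volume.restrict (Ioi (0 : ℝ)))) := by
  have hk := kk_continuous (n := n)
  have hkp := kp_continuous (n := n)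
  have hc1 := h₁.1
  have hc2 := h₂.1
  have hm : AEStronglyMeasurable (Function.uncurry (GG s c₁ c₂ x))
      ((volume : Measure (En n × En n)).prod (volume.restrict (Ioi (0 : ℝ)))) := by
    refine Measurable.aestronglyMeasurable ?_
    have e1 : Measurable (fun q : (En n × En n) × ℝ =>
        mker s (‖kk q.1.1‖ ^ 2) (‖kk q.1.2‖ ^ 2) (‖kp q.1‖ ^ 2) q.2) :=
      (mker_measurable s).comp (f := fun q : (En n × En n) × ℝ =>
        ((‖kk q.1.1‖ ^ 2, ‖kk q.1.2‖ ^ 2, ‖kp q.1‖ ^ 2), q.2)) (by fun_prop)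
    have e2 : Continuous (fun q : (En n × En n) × ℝ => ek (kp q.1) x) :=
      ek_continuous.comp (f := fun q : (En n × En n) × ℝ => (kp q.1, x)) (by fun_prop)
    have e3 : Continuous (fun q : (En n × En n) × ℝ => c₁ q.1.1 * c₂ q.1.2) := by fun_prop
    exact (e3.measurable.mul e2.measurable).mul (Complex.measurable_ofReal.comp e1)
  have main : ∀ p : En n × En n, _ := fun p => mker_main hs0 hs1 (sq_nonneg ‖kk p.1‖)
    (sq_nonneg ‖kk p.2‖) (sq_nonneg ‖kp p‖) (kp_abs p)
  rw [integrable_prod_iff hm]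
  refine ⟨Eventually.of_forall fun p => ?_, ?_⟩
  · have q := (main p).1.ofReal (𝕜 := ℂ)
    exact q.const_mul (c₁ p.1 * c₂ p.2 * ek (kp p) x)
  · refine ((c12_ints hs0 hs1 h₁ h₂).const_mul (2 * (betaS s)⁻¹)).mono'
      hm.norm.integral_prod_right' (Eventually.of_forall fun p => ?_)
    rw [Real.norm_of_nonneg (integral_nonneg fun _ => norm_nonneg _)]
    have e : ∀ z, ‖Function.uncurry (GG s c₁ c₂ x) (p, z)‖ = ‖c₁ p.1‖ * ‖c₂ p.2‖ *
        ‖mker s (‖kk p.1‖ ^ 2) (‖kk p.2‖ ^ 2) (‖kp p‖ ^ 2) z‖ := fun z => by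
      simp only [Function.uncurry, GG, norm_mul, norm_ek, Complex.norm_real, mul_one]
    simp only [e]
    rw [integral_const_mul]
    have := mul_le_mul_of_nonneg_left (main p).2.1
      (mul_nonneg (norm_nonneg (c₁ p.1)) (norm_nonneg (c₂ p.2)))
    refine this.trans (le_of_eq ?_)
    ring

lemma rhs_rep {n : ℕ} {s : ℝ} (hs0 : 0 < s) (hs1 : s < 1)
    {u v : En n → ℝ} {c₁ c₂ : En n → ℂ} (h₁ : FRep u c₁) (h₂ : FRep v c₂) (x : En n) :
    ((∫ z in Ioi (0 : ℝ), Pconv n s z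
        (fun y =>
          (∑ i, pd i (fun y' => CSext n s u y' z) y * pd i (fun y' => CSext n s v y' z) y)
            + deriv (CSext n s u y) z * deriv (CSext n s v y) z) x
        * z ^ (1 - 2 * s) : ℝ) : ℂ) =
      ∫ p : En n × En n, c₁ p.1 * c₂ p.2 * ek (kp p) x *
        (((betaS s)⁻¹ * ((‖kk p.1‖ ^ 2) ^ s + (‖kk p.2‖ ^ 2) ^ s - (‖kp p‖ ^ 2) ^ s) / 2 : ℝ) : ℂ) := by
  rw [← integral_complex_ofReal]
  have e1 := setIntegral_congr_fun (μ := volume) (s := Ioi (0 : ℝ)) measurableSet_Ioi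
    (fun z (hz : z ∈ Ioi (0 : ℝ)) => slice_rep hs0 hs1 hz h₁ h₂ x)
  refine e1.trans ?_
  rw [← integral_integral_swap (GG_int hs0 hs1 h₁ h₂ x)]
  refine integral_congr_ae (Eventually.of_forall fun p => ?_)
  have main := mker_main hs0 hs1 (sq_nonneg ‖kk p.1‖)
    (sq_nonneg ‖kk p.2‖) (sq_nonneg ‖kp p‖) (kp_abs p)
  simp only [GG]
  rw [integral_const_mul, integral_complex_ofReal, main.2.2]

lemma kp_rpow {n : ℕ} {s : ℝ} (hs0 : 0 < s) (hs1 : s < 1) (p : En n × En n) :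
    (‖kp p‖ ^ 2) ^ s ≤ 2 * ((‖kk p.1‖ ^ 2) ^ s + (‖kk p.2‖ ^ 2) ^ s) := by
  have h1 : ‖kp p‖ ^ 2 ≤ 2 * (‖kk p.1‖ ^ 2 + ‖kk p.2‖ ^ 2) := by
    have := kp_abs p
    rw [abs_le] at this
    linarith [this.1]
  calc (‖kp p‖ ^ 2) ^ s ≤ (2 * (‖kk p.1‖ ^ 2 + ‖kk p.2‖ ^ 2)) ^ s :=
        Real.rpow_le_rpow (by positivity) h1 hs0.le
    _ = 2 ^ s * (‖kk p.1‖ ^ 2 + ‖kk p.2‖ ^ 2) ^ s := Real.mul_rpow (by norm_num) (by positivity)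
    _ ≤ 2 * ((‖kk p.1‖ ^ 2) ^ s + (‖kk p.2‖ ^ 2) ^ s) := by
        gcongr
        · exact (Real.rpow_le_rpow_of_exponent_le (by norm_num) hs1.le).trans (by simp)
        · exact Real.rpow_add_le_add_rpow (by positivity) (by positivity) hs0.le hs1.le

lemma lhs_rep {n : ℕ} {s : ℝ} (hs0 : 0 < s) (hs1 : s < 1)
    {u v : En n → ℝ} {c₁ c₂ : En n → ℂ} (h₁ : FRep u c₁) (h₂ : FRep v c₂) (x : En n) :
    (Gamma1 n s u v x : ℂ) =
      ∫ p : En n × En n, c₁ p.1 * c₂ p.2 * ek (kp p) x *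
        ((((‖kk p.1‖ ^ 2) ^ s + (‖kk p.2‖ ^ 2) ^ s - (‖kp p‖ ^ 2) ^ s) / 2 : ℝ) : ℂ) := by
  have hk := kk_continuous (n := n)
  have hkp := kp_continuous (n := n)
  have hc1 := h₁.1
  have hc2 := h₂.1
  have i0 : Integrable (fun p : En n × En n => c₁ p.1 * c₂ p.2) := h₁.int.mul_prod h₂.int
  have hks : Continuous (fun ξ : En n => (‖kk ξ‖ ^ 2) ^ s) :=
    Continuous.rpow_const (by fun_prop) (fun _ => Or.inr hs0.le)
  have hkps : Continuous (fun p : En n × En n => (‖kp p‖ ^ 2) ^ s) :=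
    Continuous.rpow_const (by fun_prop) (fun _ => Or.inr hs0.le)
  have i3 : Integrable (fun p : En n × En n => ‖c₁ p.1 * c₂ p.2‖ * (‖kp p‖ ^ 2) ^ s) := by
    refine ((c12_ints hs0 hs1 h₁ h₂).const_mul 2).mono'
      (Continuous.aestronglyMeasurable (by fun_prop)) (Eventually.of_forall fun p => ?_)
    rw [norm_mul, norm_norm, norm_mul, Real.norm_of_nonneg (by positivity)]
    have := mul_le_mul_of_nonneg_left (kp_rpow hs0 hs1 p)
      (mul_nonneg (norm_nonneg (c₁ p.1)) (norm_nonneg (c₂ p.2)))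
    linarith
  have ic1 : Integrable (fun ξ => c₁ ξ * (((‖kk ξ‖ ^ 2) ^ s : ℝ) : ℂ)) := by
    refine (h₁.ints hs0 hs1).mono' (Continuous.aestronglyMeasurable (by fun_prop))
      (Eventually.of_forall fun ξ => ?_)
    rw [norm_mul, Complex.norm_real, Real.norm_of_nonneg (by positivity)]
  have ic2 : Integrable (fun ξ => c₂ ξ * (((‖kk ξ‖ ^ 2) ^ s : ℝ) : ℂ)) := by
    refine (h₂.ints hs0 hs1).mono' (Continuous.aestronglyMeasurable (by fun_prop))
      (Eventually.of_forall fun ξ => ?_)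
    rw [norm_mul, Complex.norm_real, Real.norm_of_nonneg (by positivity)]
  have i3' : Integrable (fun p : En n × En n => c₁ p.1 * c₂ p.2 * (((‖kp p‖ ^ 2) ^ s : ℝ) : ℂ)) := by
    refine i3.mono' (Continuous.aestronglyMeasurable (by fun_prop))
      (Eventually.of_forall fun p => ?_)
    rw [norm_mul, Complex.norm_real, Real.norm_of_nonneg (by positivity)]
  have f1 := fracLap_rep hs0 hs1 h₁.int hk.measurable (h₁.ints hs0 hs1) h₁.2.2 x
  have f2 := fracLap_rep hs0 hs1 h₂.int hk.measurable (h₂.ints hs0 hs1) h₂.2.2 x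
  have f3 := fracLap_rep hs0 hs1 (w := fun y => u y * v y) i0 hkp.measurable i3 (fun y => by
    push_cast
    rw [h₁.2.2 y, h₂.2.2 y]
    exact prod_rep c₁ c₂ y) x
  have g1 : (v x : ℂ) * (fracLap n s u x : ℂ) = ∫ p : En n × En n,
      (c₁ p.1 * (((‖kk p.1‖ ^ 2) ^ s : ℝ) : ℂ)) * c₂ p.2 * ek (kp p) x := by
    rw [f1, h₂.2.2 x, mul_comm]
    exact prod_rep (fun ξ => c₁ ξ * (((‖kk ξ‖ ^ 2) ^ s : ℝ) : ℂ)) c₂ x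
  have g2 : (u x : ℂ) * (fracLap n s v x : ℂ) = ∫ p : En n × En n,
      c₁ p.1 * (c₂ p.2 * (((‖kk p.2‖ ^ 2) ^ s : ℝ) : ℂ)) * ek (kp p) x := by
    rw [f2, h₁.2.2 x]
    exact prod_rep c₁ (fun ξ => c₂ ξ * (((‖kk ξ‖ ^ 2) ^ s : ℝ) : ℂ)) x
  have j1 := int_mul_ek (ic1.mul_prod h₂.int) x
  have j2 := int_mul_ek (h₁.int.mul_prod ic2) x
  have j3 := int_mul_ek i3' x
  have e : (Gamma1 n s u v x : ℂ) = ((v x : ℂ) * (fracLap n s u x : ℂ) +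
      (u x : ℂ) * (fracLap n s v x : ℂ) - (fracLap n s (fun y => u y * v y) x : ℂ)) / 2 := by
    unfold Gamma1 Lam
    push_cast
    ring
  have j12 : Integrable (fun p : En n × En n =>
      c₁ p.1 * (((‖kk p.1‖ ^ 2) ^ s : ℝ) : ℂ) * c₂ p.2 * ek (kp p) x +
        c₁ p.1 * (c₂ p.2 * (((‖kk p.2‖ ^ 2) ^ s : ℝ) : ℂ)) * ek (kp p) x) := j1.add j2
  rw [e, g1, g2, f3, ← integral_add j1 j2, ← integral_sub j12 j3, ← integral_div]
  refine integral_congr_ae (Eventually.of_forall fun p => ?_)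
  push_cast
  ring

/-- **Pointwise fractional Leibniz rule** (Theorem 1.2, Euclidean case):
`Γ₁(u,v)(x) = β_s ∫₀^∞ (P_z^{(s)} ∗ (∇̃U(·,z)·∇̃V(·,z)))(x) z^{1-2s} dz`. -/
theorem pointwise_fractional_Leibniz (n : ℕ) (hn : 1 ≤ n) (s : ℝ) (hs0 : 0 < s) (hs1 : s < 1)
    (u v : En n → ℝ) (hu : ContDiff ℝ (⊤ : ℕ∞) u) (huc : HasCompactSupport u)
    (hv : ContDiff ℝ (⊤ : ℕ∞) v) (hvc : HasCompactSupport v) :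
    ∀ x : En n,
      Gamma1 n s u v x =
        betaS s *
          ∫ z in Ioi (0 : ℝ),
            Pconv n s z
              (fun y =>
                (∑ i, pd i (fun y' => CSext n s u y' z) y * pd i (fun y' => CSext n s v y' z) y)
                  + deriv (CSext n s u y) z * deriv (CSext n s v y) z) x
              * z ^ (1 - 2 * s) := by
  intro x
  obtain ⟨c₁, h₁⟩ := fourier_repr hu huc
  obtain ⟨c₂, h₂⟩ := fourier_repr hv hvc
  have hb := (betaS_pos hs0 hs1).ne'
  apply Complex.ofReal_injective
  rw [Complex.ofReal_mul, rhs_rep hs0 hs1 h₁ h₂ x, lhs_rep hs0 hs1 h₁ h₂ x, ← integral_const_mul]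
  refine integral_congr_ae (Eventually.of_forall fun p => ?_)
  have hb' : (betaS s : ℂ) ≠ 0 := by exact_mod_cast hb
  simp only []
  push_cast
  field_simp
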